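/- arXiv:2407.06364 — 2 statements merged into one kernel-verified Lean document; each statement's English description precedes it below -/
import Mathlib

section
/- Let T be a tensorly faithful Wakamatsu tilting (S,R)-bimodule, where R is right Noetherian and S is left coherent. Assume that the injective dimension of T as a right R-module and the injective dimension of T as a left S-module are both finite. Then for every right R-module M the following are equivalent: (i) M belongs to the Bass class ℬ_T(R); (ii) the Gorenstein injective dimension Gid(M) is finite. -/
open Function MulOpposite

universe u

noncomputable section

/-! ## Chain conditions -/

/-- A ring is right coherent if every finitely generated right ideal is finitely presented. -/
def IsRightCoherentRing (R : Type u) [Ring R] : Prop :=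
  ∀ I : Submodule Rᵐᵒᵖ R, I.FG → Module.FinitePresentation Rᵐᵒᵖ I

/-- A ring is left coherent if every finitely generated left ideal is finitely presented. -/
def IsLeftCoherentRing (S : Type u) [Ring S] : Prop :=
  ∀ I : Submodule S S, I.FG → Module.FinitePresentation S I

/-- A ring is right Noetherian if every right ideal is finitely generated. -/
def IsRightNoetherianRing (R : Type u) [Ring R] : Prop :=
  ∀ I : Submodule Rᵐᵒᵖ R, I.FG

/-! ## The tensor product `N ⊗_S T` of a right `S`-module `N` with a left `S`-module `T` -/

section MTensor

variable (S : Type u) [Ring S]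
variable (N : Type u) [AddCommGroup N] [Module Sᵐᵒᵖ N]
variable (T : Type u) [AddCommGroup T] [Module S T]

/-- The subgroup of balancing relations defining `N ⊗_S T` as a quotient of `T ⊗_ℤ N`. -/
def mtRel : AddSubgroup (TensorProduct ℤ T N) :=
  AddSubgroup.closure
    {x | ∃ (s : S) (t : T) (n : N), x = (s • t) ⊗ₜ[ℤ] n - t ⊗ₜ[ℤ] (op s • n)}

/-- `MTensor S N T` is the tensor product `N ⊗_S T` of a right `S`-module `N` with a left
`S`-module `T`, realized as a quotient of `T ⊗_ℤ N`. -/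
def MTensor : Type u := TensorProduct ℤ T N ⧸ mtRel S N T

instance : AddCommGroup (MTensor S N T) :=
  inferInstanceAs (AddCommGroup (TensorProduct ℤ T N ⧸ mtRel S N T))

variable {S N T}

/-- `MTensor.mk n t` is the element `n ⊗ t` of `N ⊗_S T`. -/
def MTensor.mk (n : N) (t : T) : MTensor S N T := QuotientAddGroup.mk (t ⊗ₜ[ℤ] n)

section Map

variable {N' : Type u} [AddCommGroup N'] [Module Sᵐᵒᵖ N']

/-- Functoriality of `N ⊗_S T` in the right `S`-module variable `N`. -/
def MTensor.map (g : N →ₗ[Sᵐᵒᵖ] N') : MTensor S N T →+ MTensor S N' T :=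
  QuotientAddGroup.map _ _
    (LinearMap.lTensor T g.toAddMonoidHom.toIntLinearMap).toAddMonoidHom
    (by
      refine (AddSubgroup.closure_le _).2 ?_
      rintro x ⟨s, t, n, rfl⟩
      simp only [SetLike.mem_coe, AddSubgroup.mem_comap, LinearMap.toAddMonoidHom_coe,
        map_sub, LinearMap.lTensor_tmul, AddMonoidHom.coe_toIntLinearMap,
        LinearMap.toAddMonoidHom_coe, map_smul]
      exact AddSubgroup.subset_closure ⟨s, t, g n, rfl⟩)

end Map

section LMap

variable {T' : Type u} [AddCommGroup T'] [Module S T']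

/-- Functoriality of `N ⊗_S T` in the left `S`-module variable `T`. -/
def MTensor.lmap (h : T →ₗ[S] T') : MTensor S N T →+ MTensor S N T' :=
  QuotientAddGroup.map _ _
    (LinearMap.rTensor N h.toAddMonoidHom.toIntLinearMap).toAddMonoidHom
    (by
      refine (AddSubgroup.closure_le _).2 ?_
      rintro x ⟨s, t, n, rfl⟩
      simp only [SetLike.mem_coe, AddSubgroup.mem_comap, LinearMap.toAddMonoidHom_coe,
        map_sub, LinearMap.rTensor_tmul, AddMonoidHom.coe_toIntLinearMap, map_smul]
      exact AddSubgroup.subset_closure ⟨s, h t, n, rfl⟩)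

end LMap

section Bimod

variable (R : Type u) [Ring R] [Module Rᵐᵒᵖ T] [SMulCommClass S Rᵐᵒᵖ T]

instance MTensor.instSMul : SMul Rᵐᵒᵖ (MTensor S N T) :=
  ⟨fun ρ =>
    QuotientAddGroup.map _ _ (DistribMulAction.toAddMonoidHom (TensorProduct ℤ T N) ρ)
      (by
        refine (AddSubgroup.closure_le _).2 ?_
        rintro x ⟨s, t, n, rfl⟩
        simp only [SetLike.mem_coe, AddSubgroup.mem_comap,
          DistribMulAction.toAddMonoidHom_apply, smul_sub, TensorProduct.smul_tmul']
        exact AddSubgroup.subset_closure ⟨s, ρ • t, n, by rw [smul_comm s ρ t]⟩)⟩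

instance MTensor.instModule : Module Rᵐᵒᵖ (MTensor S N T) :=
  Function.Surjective.module Rᵐᵒᵖ (QuotientAddGroup.mk' (mtRel S N T))
    (QuotientAddGroup.mk'_surjective _) (fun _ _ => rfl)

theorem MTensor.smul_mk (ρ : Rᵐᵒᵖ) (n : N) (t : T) :
    ρ • (MTensor.mk n t : MTensor S N T) = MTensor.mk n (ρ • t) := by
  show QuotientAddGroup.mk (ρ • (t ⊗ₜ[ℤ] n)) = QuotientAddGroup.mk ((ρ • t) ⊗ₜ[ℤ] n)
  rw [TensorProduct.smul_tmul']

theorem MTensor.mk_add_right (n : N) (t t' : T) :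
    (MTensor.mk n (t + t') : MTensor S N T) = MTensor.mk n t + MTensor.mk n t' := by
  show QuotientAddGroup.mk _ = _
  rw [TensorProduct.add_tmul]
  rfl

/-- The natural map `θ_N : N → Hom_R(T, N ⊗_S T)`, `n ↦ (t ↦ n ⊗ t)`. -/
def MTensor.theta (n : N) : T →ₗ[Rᵐᵒᵖ] MTensor S N T where
  toFun t := MTensor.mk n t
  map_add' t t' := MTensor.mk_add_right n t t'
  map_smul' ρ t := (MTensor.smul_mk R ρ n t).symm

variable (S T N) in
/-- The natural map `θ_N : N → Hom_R(T, N ⊗_S T)` as a function. -/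
def MTensor.thetaFun : N → (T →ₗ[Rᵐᵒᵖ] MTensor S N T) := fun n => MTensor.theta R n

end Bimod

end MTensor

/-! ## The right `S`-module structure on `Hom_A(T, M)` induced by a left `S`-action on `T` -/

section HomModule

variable {B A : Type u} [Ring B] [Ring A]
variable {T : Type u} [AddCommGroup T] [Module A T] [Module B T] [SMulCommClass B A T]
variable {M : Type u} [AddCommGroup M] [Module A M]

instance homDomSMul : SMul Bᵐᵒᵖ (T →ₗ[A] M) :=
  ⟨fun b f =>
    { toFun := fun t => f (b.unop • t)
      map_add' := fun t t' => by
        show f (b.unop • (t + t')) = f (b.unop • t) + f (b.unop • t')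
        rw [smul_add, map_add]
      map_smul' := fun a t => by
        show f (b.unop • a • t) = a • f (b.unop • t)
        rw [smul_comm b.unop a t, map_smul] }⟩

@[simp] theorem homDomSMul_apply (b : Bᵐᵒᵖ) (f : T →ₗ[A] M) (t : T) :
    (b • f) t = f (b.unop • t) := rfl

instance homDomModule : Module Bᵐᵒᵖ (T →ₗ[A] M) where
  one_smul f := LinearMap.ext fun t => by simp
  mul_smul b b' f := LinearMap.ext fun t => by simp [mul_smul]
  smul_zero b := LinearMap.ext fun t => rfl
  smul_add b f g := LinearMap.ext fun t => rfl
  add_smul b b' f := LinearMap.ext fun t => by simp [add_smul]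
  zero_smul f := LinearMap.ext fun t => by simp

end HomModule

/-! ## The evaluation map `ν_M : Hom_R(T, M) ⊗_S T → M` -/

section Nu

variable (S R : Type u) [Ring S] [Ring R]
variable (T : Type u) [AddCommGroup T] [Module S T] [Module Rᵐᵒᵖ T] [SMulCommClass S Rᵐᵒᵖ T]
variable (M : Type u) [AddCommGroup M] [Module Rᵐᵒᵖ M]

/-- The evaluation map `ν_M : Hom_R(T, M) ⊗_S T → M`, `f ⊗ t ↦ f t`. -/
def MTensor.nuFun : MTensor S (T →ₗ[Rᵐᵒᵖ] M) T →+ M :=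
  QuotientAddGroup.lift _
    (TensorProduct.liftAddHom
      { toFun := fun t =>
          { toFun := fun f : T →ₗ[Rᵐᵒᵖ] M => f t
            map_zero' := rfl
            map_add' := fun f g => rfl }
        map_zero' := AddMonoidHom.ext fun f => f.map_zero
        map_add' := fun t t' => AddMonoidHom.ext fun f => f.map_add t t' }
      (fun z t f => by
        show f (z • t) = (z • f) t
        rw [map_zsmul, LinearMap.smul_apply]))
    (by
      refine (AddSubgroup.closure_le _).2 ?_
      rintro x ⟨s, t, f, rfl⟩
      simp only [SetLike.mem_coe, AddMonoidHom.mem_ker, map_sub,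
        TensorProduct.liftAddHom_tmul, AddMonoidHom.coe_mk, ZeroHom.coe_mk]
      show f (s • t) - (op s • f) t = 0
      rw [homDomSMul_apply]
      simp)

end Nu


/-! ## Resolutions and derived-functor vanishing -/

/-- The data of a nonnegatively graded chain complex `⋯ → P 1 → P 0 → X` of `A`-modules. -/
structure ResolutionData (A : Type u) [Ring A] (X : Type u) [AddCommGroup X] [Module A X] :
    Type (u + 1) where
  P : ℕ → Type u
  [instAdd : ∀ n, AddCommGroup (P n)]
  [instMod : ∀ n, Module A (P n)]
  d : ∀ n, P (n + 1) →ₗ[A] P n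
  ε : P 0 →ₗ[A] X

attribute [instance] ResolutionData.instAdd ResolutionData.instMod

/-- The property of being a projective resolution. -/
structure ResolutionData.IsProjResolution {A : Type u} [Ring A] {X : Type u} [AddCommGroup X]
    [Module A X] (Q : ResolutionData A X) : Prop where
  proj : ∀ n, Module.Projective A (Q.P n)
  surj : Function.Surjective Q.ε
  exact0 : Function.Exact (Q.d 0) Q.ε
  exactSucc : ∀ n, Function.Exact (Q.d (n + 1)) (Q.d n)

/-- `X` has a resolution by finitely generated projective `A`-modules. -/
def HasFGProjResolution (A : Type u) [Ring A] (X : Type u) [AddCommGroup X] [Module A X] : Prop :=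
  ∃ Q : ResolutionData A X, Q.IsProjResolution ∧ ∀ n, Module.Finite A (Q.P n)

/-- `Ext^i_A(X, Y) = 0` for all `i ≥ 1`: some (equivalently, any) projective resolution of `X`
has `Hom_A(-, Y)`-complex exact at all positive degrees. -/
def ExtVanishAll (A : Type u) [Ring A] (X Y : Type u) [AddCommGroup X] [Module A X]
    [AddCommGroup Y] [Module A Y] : Prop :=
  ∃ Q : ResolutionData A X, Q.IsProjResolution ∧
    ∀ j : ℕ, Function.Exact
      (fun f : Q.P j →ₗ[A] Y => f.comp (Q.d j))
      (fun f : Q.P (j + 1) →ₗ[A] Y => f.comp (Q.d (j + 1)))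

/-- `Ext^1_A(X, Y) = 0`: every short exact sequence `0 → Y → E → X → 0` splits. -/
def Ext1Vanishes (A : Type u) [Ring A] (X Y : Type u) [AddCommGroup X] [Module A X]
    [AddCommGroup Y] [Module A Y] : Prop :=
  ∀ (E : Type u) [AddCommGroup E] [Module A E] (i : Y →ₗ[A] E) (p : E →ₗ[A] X),
    Function.Injective i → Function.Surjective p → Function.Exact i p →
      ∃ s : X →ₗ[A] E, p.comp s = LinearMap.id

/-- `Tor^S_i(N, T) = 0` for all `i ≥ 1`: some (equivalently, any) projective resolution of the
right `S`-module `N` stays exact in positive degrees after applying `- ⊗_S T`. -/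
def TorVanishAll (S : Type u) [Ring S] (N : Type u) [AddCommGroup N] [Module Sᵐᵒᵖ N]
    (T : Type u) [AddCommGroup T] [Module S T] : Prop :=
  ∃ Q : ResolutionData Sᵐᵒᵖ N, Q.IsProjResolution ∧
    ∀ j : ℕ, Function.Exact
      (⇑(MTensor.map (T := T) (Q.d (j + 1))))
      (⇑(MTensor.map (T := T) (Q.d j)))

/-! ## Homological dimensions -/

/-- A surjection onto `M` from some module. -/
structure EpiOnto (A : Type u) [Ring A] (M : ModuleCat.{u} A) : Type (u + 1) where
  P : ModuleCat.{u} A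
  f : P →ₗ[A] M
  surj : Function.Surjective f

/-- An injection of `M` into some module. -/
structure MonoInto (A : Type u) [Ring A] (M : ModuleCat.{u} A) : Type (u + 1) where
  E : ModuleCat.{u} A
  f : M →ₗ[A] E
  inj : Function.Injective f

/-- `HasClassResolution A 𝒞 n M` says that there is an exact sequence
`0 → C_n → ⋯ → C_0 → M → 0` with all `C_i` in the class `𝒞`. -/
def HasClassResolution (A : Type u) [Ring A] (C : ModuleCat.{u} A → Prop) :
    ℕ → ModuleCat.{u} A → Prop
  | 0, M => C M
  | n + 1, M => ∃ e : EpiOnto A M, C e.P ∧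
      HasClassResolution A C n (ModuleCat.of A (LinearMap.ker e.f))

/-- `HasClassCoresolution A 𝒞 n M` says that there is an exact sequence
`0 → M → C^0 → ⋯ → C^n → 0` with all `C^i` in the class `𝒞`. -/
def HasClassCoresolution (A : Type u) [Ring A] (C : ModuleCat.{u} A → Prop) :
    ℕ → ModuleCat.{u} A → Prop
  | 0, M => C M
  | n + 1, M => ∃ m : MonoInto A M, C m.E ∧
      HasClassCoresolution A C n (ModuleCat.of A ((↥m.E) ⧸ LinearMap.range m.f))

/-- The projective dimension of `M` is at most `n`. -/
def ProjDimLE (A : Type u) [Ring A] (M : Type u) [AddCommGroup M] [Module A M] (n : ℕ) : Prop :=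
  HasClassResolution A (fun P => Module.Projective A P) n (ModuleCat.of A M)

/-- The injective dimension of `M` is at most `n`. -/
def InjDimLE (A : Type u) [Ring A] (M : Type u) [AddCommGroup M] [Module A M] (n : ℕ) : Prop :=
  HasClassCoresolution A (fun E => Module.Injective A E) n (ModuleCat.of A M)

/-- A right `S`-module `N` is flat if `N ⊗_S -` preserves injections of left `S`-modules. -/
def IsFlatRightModule (S : Type u) [Ring S] (N : Type u) [AddCommGroup N] [Module Sᵐᵒᵖ N] :
    Prop :=
  ∀ (X Y : Type u) [AddCommGroup X] [Module S X] [AddCommGroup Y] [Module S Y]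
    (g : X →ₗ[S] Y), Function.Injective g →
      Function.Injective (MTensor.lmap (N := N) g)

/-- The flat dimension of the right `S`-module `N` is at most `n`. -/
def FlatDimLE (S : Type u) [Ring S] (N : Type u) [AddCommGroup N] [Module Sᵐᵒᵖ N] (n : ℕ) :
    Prop :=
  HasClassResolution Sᵐᵒᵖ (fun P => IsFlatRightModule S P) n (ModuleCat.of Sᵐᵒᵖ N)

/-! ## Gorenstein homological algebra -/

/-- The data of a `ℤ`-indexed complex of `A`-modules. -/
structure ZComplex (A : Type u) [Ring A] : Type (u + 1) where
  P : ℤ → Type u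
  [instAdd : ∀ i, AddCommGroup (P i)]
  [instMod : ∀ i, Module A (P i)]
  d : ∀ i, P i →ₗ[A] P (i + 1)

attribute [instance] ZComplex.instAdd ZComplex.instMod

/-- Exactness of a `ℤ`-indexed complex. -/
def ZComplex.IsExact {A : Type u} [Ring A] (C : ZComplex A) : Prop :=
  ∀ i, Function.Exact (C.d i) (C.d (i + 1))

/-- A module is Gorenstein projective if it is a kernel of a totally acyclic complex of
projective modules. -/
def IsGorensteinProjective (A : Type u) [Ring A] (N : Type u) [AddCommGroup N] [Module A N] :
    Prop :=
  ∃ C : ZComplex A, (∀ i, Module.Projective A (C.P i)) ∧ C.IsExact ∧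
    (∀ (Q : Type u) [AddCommGroup Q] [Module A Q], Module.Projective A Q →
      ∀ i, Function.Exact
        (fun f : C.P (i + 1 + 1) →ₗ[A] Q => f.comp (C.d (i + 1)))
        (fun f : C.P (i + 1) →ₗ[A] Q => f.comp (C.d i))) ∧
    Nonempty (N ≃ₗ[A] LinearMap.ker (C.d 0))

/-- A module is Gorenstein injective if it is a kernel of a totally acyclic complex of
injective modules. -/
def IsGorensteinInjective (A : Type u) [Ring A] (M : Type u) [AddCommGroup M] [Module A M] :
    Prop :=
  ∃ C : ZComplex A, (∀ i, Module.Injective A (C.P i)) ∧ C.IsExact ∧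
    (∀ (I : Type u) [AddCommGroup I] [Module A I], Module.Injective A I →
      ∀ i, Function.Exact
        (fun f : I →ₗ[A] C.P i => (C.d i).comp f)
        (fun f : I →ₗ[A] C.P (i + 1) => (C.d (i + 1)).comp f)) ∧
    Nonempty (M ≃ₗ[A] LinearMap.ker (C.d 0))

/-- A right `S`-module is Gorenstein flat if it is a kernel of a complex of flat right
`S`-modules which stays exact after tensoring with any injective left `S`-module. -/
def IsGorensteinFlat (S : Type u) [Ring S] (N : Type u) [AddCommGroup N] [Module Sᵐᵒᵖ N] :
    Prop :=
  ∃ C : ZComplex Sᵐᵒᵖ, (∀ i, IsFlatRightModule S (C.P i)) ∧ C.IsExact ∧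
    (∀ (I : Type u) [AddCommGroup I] [Module S I], Module.Injective S I →
      ∀ i, Function.Exact
        (⇑(MTensor.map (T := I) (C.d i)))
        (⇑(MTensor.map (T := I) (C.d (i + 1))))) ∧
    Nonempty (N ≃ₗ[Sᵐᵒᵖ] LinearMap.ker (C.d 0))

/-- The Gorenstein projective dimension of `N` is at most `n`. -/
def GpdLE (A : Type u) [Ring A] (N : Type u) [AddCommGroup N] [Module A N] (n : ℕ) : Prop :=
  HasClassResolution A (fun P => IsGorensteinProjective A P) n (ModuleCat.of A N)

/-- The Gorenstein flat dimension of the right `S`-module `N` is at most `n`. -/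
def GfdLE (S : Type u) [Ring S] (N : Type u) [AddCommGroup N] [Module Sᵐᵒᵖ N] (n : ℕ) : Prop :=
  HasClassResolution Sᵐᵒᵖ (fun P => IsGorensteinFlat S P) n (ModuleCat.of Sᵐᵒᵖ N)

/-- The Gorenstein injective dimension of `M` is at most `n`. -/
def GidLE (A : Type u) [Ring A] (M : Type u) [AddCommGroup M] [Module A M] (n : ℕ) : Prop :=
  HasClassCoresolution A (fun E => IsGorensteinInjective A E) n (ModuleCat.of A M)

/-! ## Module classes `Prod(C)`, `Add(C)`, `add(C)` and (co)generators -/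

/-- `M` is a retract (equivalently, a direct summand up to isomorphism) of `P`. -/
def IsRetractOf (A : Type u) [Ring A] (M P : Type u) [AddCommGroup M] [Module A M]
    [AddCommGroup P] [Module A P] : Prop :=
  ∃ (f : M →ₗ[A] P) (g : P →ₗ[A] M), g.comp f = LinearMap.id

/-- `Prod(C)`: direct summands of direct products of copies of `C`. -/
def InProdClass (A : Type u) [Ring A] (C : Type u) [AddCommGroup C] [Module A C]
    (M : ModuleCat.{u} A) : Prop :=
  ∃ I : Type u, IsRetractOf A M (I → C)

/-- `Add(C)`: direct summands of direct sums of copies of `C`. -/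
def InAddClass (A : Type u) [Ring A] (C : Type u) [AddCommGroup C] [Module A C]
    (M : ModuleCat.{u} A) : Prop :=
  ∃ I : Type u, IsRetractOf A M (I →₀ C)

/-- `add(C)`: direct summands of finite direct sums of copies of `C`. -/
def InFinAddClass (A : Type u) [Ring A] (C : Type u) [AddCommGroup C] [Module A C]
    (M : ModuleCat.{u} A) : Prop :=
  ∃ k : ℕ, IsRetractOf A M (Fin k → C)

/-- `Q` is an injective cogenerator: `Q` is injective and every module embeds into a direct
product of copies of `Q`. -/
def IsInjectiveCogenerator (A : Type u) [Ring A] (Q : Type u) [AddCommGroup Q] [Module A Q] :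
    Prop :=
  Module.Injective A Q ∧
    ∀ (M : Type u) [AddCommGroup M] [Module A M],
      ∃ (I : Type u) (f : M →ₗ[A] (I → Q)), Function.Injective f

/-- `E` is the minimal injective cogenerator: it is an injective cogenerator which is a direct
summand of every injective cogenerator. -/
def IsMinimalInjectiveCogenerator (A : Type u) [Ring A] (E : Type u) [AddCommGroup E]
    [Module A E] : Prop :=
  IsInjectiveCogenerator A E ∧
    ∀ (Q : Type u) [AddCommGroup Q] [Module A Q],
      IsInjectiveCogenerator A Q → IsRetractOf A E Q

/-! ## Bimodules, homotheties, Wakamatsu tilting bimodules -/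

section Bimodules

variable (S R : Type u) [Ring S] [Ring R]
variable (T : Type u) [AddCommGroup T] [Module S T] [Module Rᵐᵒᵖ T] [SMulCommClass S Rᵐᵒᵖ T]

/-- The natural map `S → End(T_R)` given by the left `S`-action. -/
def leftHomothety : S → (T →ₗ[Rᵐᵒᵖ] T) := fun s =>
  { toFun := fun t => s • t
    map_add' := fun t t' => smul_add s t t'
    map_smul' := fun ρ t => smul_comm s ρ t }

/-- The natural map `R → End(_S T)` given by the right `R`-action. -/
def rightHomothety : R → (T →ₗ[S] T) := fun r =>
  { toFun := fun t => op r • t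
    map_add' := fun t t' => smul_add (op r) t t'
    map_smul' := fun s t => (smul_comm s (op r) t).symm }

/-- A Wakamatsu tilting `(S, R)`-bimodule: `T` admits resolutions by finitely generated
projectives on both sides, the natural maps `S → End(T_R)` and `R → End(_S T)` are
isomorphisms, and `Ext^i(T, T) = 0` on both sides for all `i ≥ 1`. -/
structure IsWakamatsuTilting : Prop where
  fgProjResR : HasFGProjResolution Rᵐᵒᵖ T
  fgProjResS : HasFGProjResolution S T
  bijS : Function.Bijective (leftHomothety S R T)
  bijR : Function.Bijective (rightHomothety S R T)
  extR : ExtVanishAll Rᵐᵒᵖ T T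
  extS : ExtVanishAll S T T

/-- An `(S, R)`-bimodule `T` is tensorly faithful if `T ⊗_R M = 0` implies `M = 0` and
`N ⊗_S T = 0` implies `N = 0`. -/
def IsTensorlyFaithful : Prop :=
  (∀ (M : Type u) [AddCommGroup M] [Module R M],
      Subsingleton (MTensor R T M) → Subsingleton M) ∧
  (∀ (N : Type u) [AddCommGroup N] [Module Sᵐᵒᵖ N],
      Subsingleton (MTensor S N T) → Subsingleton N)

/-- Membership in the Auslander class `𝒜_T(S)`. -/
structure InAuslanderClass (N : Type u) [AddCommGroup N] [Module Sᵐᵒᵖ N] : Prop where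
  torVanish : TorVanishAll S N T
  extVanish : ExtVanishAll Rᵐᵒᵖ T (MTensor S N T)
  thetaBij : Function.Bijective (MTensor.thetaFun S N T R)

/-- Membership in the Bass class `ℬ_T(R)`. -/
structure InBassClass (M : Type u) [AddCommGroup M] [Module Rᵐᵒᵖ M] : Prop where
  extVanish : ExtVanishAll Rᵐᵒᵖ T M
  torVanish : TorVanishAll S (T →ₗ[Rᵐᵒᵖ] M) T
  nuBij : Function.Bijective (MTensor.nuFun S R T M)

end Bimodules

/-! ## Cotilting and tilting modules -/

/-- A cotilting right `R`-module (Hügel–Coelho): finite injective dimension,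
`Ext^{i≥1}_R(Cᴵ, C) = 0` for every index set `I`, and there is a finite exact sequence
`0 → C_r → ⋯ → C_0 → Q → 0` with all `C_i ∈ Prod(C)` and `Q` an injective cogenerator. -/
structure IsCotilting (R : Type u) [Ring R] (C : Type u) [AddCommGroup C] [Module Rᵐᵒᵖ C] :
    Prop where
  finInjDim : ∃ n, InjDimLE Rᵐᵒᵖ C n
  extProdVanish : ∀ I : Type u, ExtVanishAll Rᵐᵒᵖ (I → C) C
  coresolution : ∃ (Q : ModuleCat.{u} Rᵐᵒᵖ) (r : ℕ),
    IsInjectiveCogenerator Rᵐᵒᵖ Q ∧ HasClassResolution Rᵐᵒᵖ (InProdClass Rᵐᵒᵖ C) r Q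

/-- An `n`-tilting right `R`-module (Miyashita). -/
structure IsNTilting (R : Type u) [Ring R] (T : Type u) [AddCommGroup T] [Module Rᵐᵒᵖ T]
    (n : ℕ) : Prop where
  fgProjRes : HasFGProjResolution Rᵐᵒᵖ T
  projDim : ProjDimLE Rᵐᵒᵖ T n
  extVanish : ExtVanishAll Rᵐᵒᵖ T T
  coresolution : HasClassCoresolution Rᵐᵒᵖ (InFinAddClass Rᵐᵒᵖ T) n (ModuleCat.of Rᵐᵒᵖ R)

/-- The data of a coresolution `0 → R → P 0 → P 1 → ⋯` of right `R`-modules. -/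
structure WakamatsuCoresolutionData (R : Type u) [Ring R] : Type (u + 1) where
  P : ℕ → Type u
  [instAdd : ∀ n, AddCommGroup (P n)]
  [instMod : ∀ n, Module Rᵐᵒᵖ (P n)]
  f0 : R →ₗ[Rᵐᵒᵖ] P 0
  d : ∀ n, P n →ₗ[Rᵐᵒᵖ] P (n + 1)

attribute [instance] WakamatsuCoresolutionData.instAdd WakamatsuCoresolutionData.instMod

/-- A Wakamatsu tilting right `R`-module: it admits a resolution by finitely generated
projective right `R`-modules, `Ext^{i≥1}_R(T, T) = 0`, and there is an exact sequence
`0 → R → T^0 → T^1 → ⋯` with each `T^i ∈ add(T)` and `Ext^1_R(Coker f, T) = 0` for every map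
`f` in this sequence. -/
def IsWakamatsuTiltingModule (R : Type u) [Ring R] (T : Type u) [AddCommGroup T]
    [Module Rᵐᵒᵖ T] : Prop :=
  HasFGProjResolution Rᵐᵒᵖ T ∧ ExtVanishAll Rᵐᵒᵖ T T ∧
    ∃ W : WakamatsuCoresolutionData R,
      Function.Injective W.f0 ∧ Function.Exact W.f0 (W.d 0) ∧
      (∀ n, Function.Exact (W.d n) (W.d (n + 1))) ∧
      (∀ n, InFinAddClass Rᵐᵒᵖ T (ModuleCat.of Rᵐᵒᵖ (W.P n))) ∧
      Ext1Vanishes Rᵐᵒᵖ ((W.P 0) ⧸ LinearMap.range W.f0) T ∧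
      (∀ n, Ext1Vanishes Rᵐᵒᵖ ((W.P (n + 1)) ⧸ LinearMap.range (W.d n)) T)

/-! ## Short exact sequences and vanishing of `Ext` -/

/-- `0 → X → Y → Z → 0` is a short exact sequence of `A`-modules. -/
structure IsSES {A : Type u} [Ring A] {X Y Z : Type u} [AddCommGroup X] [Module A X]
    [AddCommGroup Y] [Module A Y] [AddCommGroup Z] [Module A Z]
    (f : X →ₗ[A] Y) (g : Y →ₗ[A] Z) : Prop where
  inj : Injective f
  surj : Surjective g
  exact : Exact f g

/-- `Ext^i_A(X, Y) = 0`. -/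
def ExtZero (A : Type u) [Ring A] (X Y : Type u) [AddCommGroup X] [Module A X]
    [AddCommGroup Y] [Module A Y] (i : ℕ) : Prop :=
  Subsingleton (CategoryTheory.Abelian.Ext (ModuleCat.of A X) (ModuleCat.of A Y) i)

section ExtZero

open CategoryTheory Abelian

variable {A : Type u} [Ring A] {X Y Z W : Type u} [AddCommGroup X] [Module A X]
    [AddCommGroup Y] [Module A Y] [AddCommGroup Z] [Module A Z] [AddCommGroup W] [Module A W]

/-- The short complex in `ModuleCat A` attached to a short exact sequence. -/
abbrev IsSES.complex {f : X →ₗ[A] Y} {g : Y →ₗ[A] Z} (h : IsSES f g) :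
    ShortComplex (ModuleCat.{u} A) :=
  ShortComplex.mk (ModuleCat.ofHom f) (ModuleCat.ofHom g) (by
    ext x; exact h.exact.apply_apply_eq_zero x)

theorem IsSES.shortExact {f : X →ₗ[A] Y} {g : Y →ₗ[A] Z} (h : IsSES f g) :
    h.complex.ShortExact where
  exact := (ShortComplex.ShortExact.moduleCat_exact_iff_function_exact _).2 h.exact
  mono_f := (ModuleCat.mono_iff_injective _).2 h.inj
  epi_g := (ModuleCat.epi_iff_surjective _).2 h.surj

theorem extZero_of_projective (hX : Module.Projective A X) (i : ℕ) : ExtZero A X Y (i + 1) := by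
  have : Projective (ModuleCat.of A X) := (IsProjective.iff_projective X).1 hX
  exact Ext.subsingleton_of_projective _ _ _

theorem extZero_of_injective (hY : Module.Injective A Y) (i : ℕ) : ExtZero A X Y (i + 1) := by
  have : CategoryTheory.Injective (ModuleCat.of A Y) :=
    Module.injective_object_of_injective_module A Y
  exact Ext.subsingleton_of_injective _ _ _

/-- A retract of an object with vanishing `Ext` has vanishing `Ext`. -/
theorem ExtZero.retract_left {s : Z →ₗ[A] X} {p : X →ₗ[A] Z} (hs : p.comp s = LinearMap.id) {i : ℕ}
    (h : ExtZero A X Y i) : ExtZero A Z Y i := by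
  have : Subsingleton _ := h
  refine subsingleton_of_forall_eq 0 fun x => ?_
  have h1 : (Ext.mk₀ (ModuleCat.ofHom s)).comp
      ((Ext.mk₀ (ModuleCat.ofHom p)).comp x (zero_add i)) (zero_add i) = x := by
    rw [Ext.mk₀_comp_mk₀_assoc, ← ModuleCat.ofHom_comp, hs]
    exact Ext.mk₀_id_comp x
  rw [← h1, Subsingleton.elim ((Ext.mk₀ (ModuleCat.ofHom p)).comp x (zero_add i)) 0, Ext.comp_zero]

namespace IsSES

variable {f : X →ₗ[A] Y} {g : Y →ₗ[A] Z}

theorem ext_third_left (h : IsSES f g) {i : ℕ} (h1 : ExtZero A X W i) (h2 : ExtZero A Y W (i + 1)) :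
    ExtZero A Z W (i + 1) := by
  have : Subsingleton _ := h1
  have : Subsingleton _ := h2
  refine subsingleton_of_forall_eq 0 fun x => ?_
  obtain ⟨y, rfl⟩ := Ext.contravariant_sequence_exact₃ h.shortExact _ x
    (Subsingleton.elim (α := Ext (ModuleCat.of A Y) (ModuleCat.of A W) (i + 1)) _ _)
    (add_comm 1 i)
  rw [Subsingleton.elim (α := Ext (ModuleCat.of A X) (ModuleCat.of A W) i) y 0, Ext.comp_zero]

theorem ext_first_left (h : IsSES f g) {i : ℕ} (h2 : ExtZero A Y W i) (h3 : ExtZero A Z W (i + 1)) :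
    ExtZero A X W i := by
  have : Subsingleton _ := h2
  have : Subsingleton _ := h3
  refine subsingleton_of_forall_eq 0 fun x => ?_
  obtain ⟨y, rfl⟩ := Ext.contravariant_sequence_exact₁ h.shortExact _ x (add_comm 1 i)
    (Subsingleton.elim (α := Ext (ModuleCat.of A Z) (ModuleCat.of A W) (i + 1)) _ _)
  rw [Subsingleton.elim (α := Ext (ModuleCat.of A Y) (ModuleCat.of A W) i) y 0, Ext.comp_zero]

theorem ext_third_right (h : IsSES f g) {i : ℕ} (h1 : ExtZero A W X (i + 1))
    (h2 : ExtZero A W Y i) : ExtZero A W Z i := by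
  have : Subsingleton _ := h1
  have : Subsingleton _ := h2
  refine subsingleton_of_forall_eq 0 fun x => ?_
  obtain ⟨y, rfl⟩ := Ext.covariant_sequence_exact₃ _ h.shortExact x rfl
    (Subsingleton.elim (α := Ext (ModuleCat.of A W) (ModuleCat.of A X) (i + 1)) _ _)
  rw [Subsingleton.elim (α := Ext (ModuleCat.of A W) (ModuleCat.of A Y) i) y 0, Ext.zero_comp]

theorem ext_first_right (h : IsSES f g) {i : ℕ} (h2 : ExtZero A W Y (i + 1))
    (h3 : ExtZero A W Z i) : ExtZero A W X (i + 1) := by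
  have : Subsingleton _ := h2
  have : Subsingleton _ := h3
  refine subsingleton_of_forall_eq 0 fun x => ?_
  obtain ⟨y, rfl⟩ := Ext.covariant_sequence_exact₁ _ h.shortExact x
    (Subsingleton.elim (α := Ext (ModuleCat.of A W) (ModuleCat.of A Y) (i + 1)) _ _) rfl
  rw [Subsingleton.elim (α := Ext (ModuleCat.of A W) (ModuleCat.of A Z) i) y 0, Ext.zero_comp]

theorem exists_extension (h : IsSES f g) (h3 : ExtZero A Z W 1) (φ : X →ₗ[A] W) :
    ∃ ψ : Y →ₗ[A] W, ψ.comp f = φ := by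
  have : Subsingleton _ := h3
  obtain ⟨y, hy⟩ := Ext.contravariant_sequence_exact₁ h.shortExact (ModuleCat.of A W)
    (Ext.mk₀ (ModuleCat.ofHom φ)) (add_zero 1)
    (Subsingleton.elim (α := Ext (ModuleCat.of A Z) (ModuleCat.of A W) 1) _ _)
  obtain ⟨ψ, rfl⟩ := (Ext.mk₀_bijective _ _).2 y
  rw [Ext.mk₀_comp_mk₀] at hy
  exact ⟨ψ.hom, congrArg ModuleCat.Hom.hom ((Ext.mk₀_bijective _ _).1 hy)⟩

theorem exists_lift (h : IsSES f g) (h1 : ExtZero A W X 1) (φ : W →ₗ[A] Z) :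
    ∃ ψ : W →ₗ[A] Y, g.comp ψ = φ := by
  have : Subsingleton _ := h1
  obtain ⟨y, hy⟩ := Ext.covariant_sequence_exact₃ (ModuleCat.of A W) h.shortExact
    (Ext.mk₀ (ModuleCat.ofHom φ)) (zero_add 1)
    (Subsingleton.elim (α := Ext (ModuleCat.of A W) (ModuleCat.of A X) 1) _ _)
  obtain ⟨ψ, rfl⟩ := (Ext.mk₀_bijective _ _).2 y
  rw [Ext.mk₀_comp_mk₀] at hy
  exact ⟨ψ.hom, congrArg ModuleCat.Hom.hom ((Ext.mk₀_bijective _ _).1 hy)⟩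

theorem extZero_one_of_extension (h : IsSES f g) (h2 : ExtZero A Y W 1)
    (hext : ∀ φ : X →ₗ[A] W, ∃ ψ : Y →ₗ[A] W, ψ.comp f = φ) : ExtZero A Z W 1 := by
  have : Subsingleton _ := h2
  refine subsingleton_of_forall_eq 0 fun x => ?_
  obtain ⟨y, rfl⟩ := Ext.contravariant_sequence_exact₃ h.shortExact _ x
    (Subsingleton.elim (α := Ext (ModuleCat.of A Y) (ModuleCat.of A W) 1) _ _) (add_zero 1)
  obtain ⟨φ, rfl⟩ := (Ext.mk₀_bijective _ _).2 y
  obtain ⟨ψ, hψ⟩ := hext φ.hom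
  have : φ = h.complex.f ≫ ModuleCat.ofHom ψ := by
    ext x; exact (LinearMap.congr_fun hψ x).symm
  rw [this, ← Ext.mk₀_comp_mk₀, h.shortExact.extClass_comp_assoc]

theorem extZero_one_of_lift (h : IsSES f g) (h2 : ExtZero A W Y 1)
    (hlift : ∀ φ : W →ₗ[A] Z, ∃ ψ : W →ₗ[A] Y, g.comp ψ = φ) : ExtZero A W X 1 := by
  have : Subsingleton _ := h2
  refine subsingleton_of_forall_eq 0 fun x => ?_
  obtain ⟨y, rfl⟩ := Ext.covariant_sequence_exact₁ _ h.shortExact x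
    (Subsingleton.elim (α := Ext (ModuleCat.of A W) (ModuleCat.of A Y) 1) _ _) (zero_add 1)
  obtain ⟨φ, rfl⟩ := (Ext.mk₀_bijective _ _).2 y
  obtain ⟨ψ, hψ⟩ := hlift φ.hom
  have : φ = ModuleCat.ofHom ψ ≫ h.complex.g := by
    ext x; exact (LinearMap.congr_fun hψ x).symm
  rw [this, ← Ext.mk₀_comp_mk₀, Ext.comp_assoc_of_second_deg_zero]
  rw [h.shortExact.comp_extClass, Ext.comp_zero]

end IsSES

end ExtZero

/-! ## Comparison of the elementary definitions with `Ext` -/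

section Resolution

variable {A : Type u} [Ring A] {X Y : Type u} [AddCommGroup X] [Module A X]
    [AddCommGroup Y] [Module A Y]

theorem IsSES.of_surjective {g : X →ₗ[A] Y} (hg : Surjective g) :
    IsSES (LinearMap.ker g).subtype g where
  inj := Subtype.val_injective
  surj := hg
  exact := LinearMap.exact_subtype_ker_map g

theorem IsSES.of_injective {f : X →ₗ[A] Y} (hf : Injective f) :
    IsSES f (LinearMap.range f).mkQ where
  inj := hf
  surj := Submodule.mkQ_surjective _
  exact := LinearMap.exact_map_mkQ_range f

/-- The truncation of a projective resolution of `X`, resolving the first syzygy. -/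
abbrev ResolutionData.tail (Q : ResolutionData A X) (hQ : Q.IsProjResolution) :
    ResolutionData A (LinearMap.ker Q.ε) where
  P n := Q.P (n + 1)
  d n := Q.d (n + 1)
  ε := (Q.d 0).codRestrict _ fun x => hQ.exact0.apply_apply_eq_zero x

theorem ResolutionData.IsProjResolution.tail {Q : ResolutionData A X} (hQ : Q.IsProjResolution) :
    (Q.tail hQ).IsProjResolution where
  proj n := hQ.proj (n + 1)
  surj := by
    rintro ⟨x, hx⟩
    obtain ⟨y, rfl⟩ := (hQ.exact0 x).1 hx
    exact ⟨y, rfl⟩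
  exact0 := by
    intro x
    rw [← hQ.exactSucc 0 x]
    exact Subtype.ext_iff
  exactSucc n := hQ.exactSucc (n + 1)

theorem ResolutionData.IsProjResolution.exact_iff_extZero {Q : ResolutionData A X}
    (hQ : Q.IsProjResolution) (j : ℕ) :
    Exact (fun f : Q.P j →ₗ[A] Y => f.comp (Q.d j))
      (fun f : Q.P (j + 1) →ₗ[A] Y => f.comp (Q.d (j + 1))) ↔ ExtZero A X Y (j + 1) := by
  induction j generalizing X with
  | zero =>
    have hs := IsSES.of_surjective hQ.surj
    constructor
    · intro h
      refine hs.extZero_one_of_extension (extZero_of_projective (hQ.proj 0) 0) fun φ => ?_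
      obtain ⟨ψ, hψ⟩ := (h (φ.comp (Q.tail hQ).ε)).1 (by
        show (φ.comp (Q.tail hQ).ε).comp (Q.d 1) = 0
        ext x
        have : (Q.tail hQ).ε (Q.d 1 x) = 0 := hQ.tail.exact0.apply_apply_eq_zero x
        simp only [LinearMap.comp_apply, this, map_zero, LinearMap.zero_apply])
      refine ⟨ψ, LinearMap.ext fun x => ?_⟩
      obtain ⟨y, rfl⟩ := hQ.tail.surj x
      exact LinearMap.congr_fun hψ y
    · intro h f
      constructor
      · intro hf
        have hle : LinearMap.ker (Q.tail hQ).ε ≤ LinearMap.ker f := by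
          intro x hx
          obtain ⟨y, rfl⟩ := (hQ.tail.exact0 x).1 hx
          exact LinearMap.congr_fun hf y
        obtain ⟨ψ, hψ⟩ := hs.exists_extension h
          (((LinearMap.ker (Q.tail hQ).ε).liftQ f hle).comp
            ((Q.tail hQ).ε.quotKerEquivOfSurjective hQ.tail.surj).symm.toLinearMap)
        refine ⟨ψ, LinearMap.ext fun x => ?_⟩
        have := LinearMap.congr_fun hψ ((Q.tail hQ).ε x)
        simp only [LinearMap.comp_apply, LinearEquiv.coe_coe] at this
        refine Eq.trans this ?_
        have h2 : ((Q.tail hQ).ε.quotKerEquivOfSurjective hQ.tail.surj).symm ((Q.tail hQ).ε x) =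
            Submodule.Quotient.mk x := by
          rw [LinearEquiv.symm_apply_eq]; rfl
        rw [h2]
        rfl
      · rintro ⟨g, rfl⟩
        refine LinearMap.ext fun x => ?_
        show g (Q.d 0 (Q.d 1 x)) = 0
        rw [(hQ.exactSucc 0).apply_apply_eq_zero, map_zero]
  | succ j ih =>
    have hs := IsSES.of_surjective hQ.surj
    refine (ih hQ.tail).trans ⟨fun h => ?_, fun h => ?_⟩
    · exact hs.ext_third_left h (extZero_of_projective (hQ.proj 0) (j + 1))
    · exact hs.ext_first_left (extZero_of_projective (hQ.proj 0) j) h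

variable (A X) in
/-- Iterated kernels of free covers. -/
abbrev freeSyzygy : ℕ → ModuleCat.{u} A
  | 0 => ModuleCat.of A X
  | n + 1 => ModuleCat.of A
      (LinearMap.ker (Finsupp.linearCombination A (id : freeSyzygy n → freeSyzygy n)))

variable (A X) in
/-- The free resolution built from iterated free covers. -/
def freeResolution : ResolutionData A X where
  P n := freeSyzygy A X n →₀ A
  d n := (LinearMap.ker (Finsupp.linearCombination A
      (id : freeSyzygy A X n → freeSyzygy A X n))).subtype.comp
    (Finsupp.linearCombination A (id : freeSyzygy A X (n + 1) → freeSyzygy A X (n + 1)))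
  ε := Finsupp.linearCombination A (id : X → X)

theorem freeResolution_isProjResolution : (freeResolution A X).IsProjResolution where
  proj n := inferInstanceAs (Module.Projective A (freeSyzygy A X n →₀ A))
  surj := Finsupp.linearCombination_id_surjective A X
  exact0 := by
    intro x
    refine ⟨fun hx => ?_, ?_⟩
    · obtain ⟨y, hy⟩ := Finsupp.linearCombination_id_surjective A (freeSyzygy A X 1) ⟨x, hx⟩
      exact ⟨y, congrArg Subtype.val hy⟩
    · rintro ⟨y, rfl⟩
      exact (Finsupp.linearCombination A (id : freeSyzygy A X 1 → freeSyzygy A X 1) y).2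
  exactSucc n := by
    intro x
    refine Iff.trans (b := Finsupp.linearCombination A
      (id : freeSyzygy A X (n + 1) → freeSyzygy A X (n + 1)) x = 0) ?_ ⟨fun hx => ?_, ?_⟩
    · exact Submodule.coe_eq_zero
    · obtain ⟨y, hy⟩ := Finsupp.linearCombination_id_surjective A (freeSyzygy A X (n + 2)) ⟨x, hx⟩
      exact ⟨y, congrArg Subtype.val hy⟩
    · rintro ⟨y, rfl⟩
      exact (Finsupp.linearCombination A (id : freeSyzygy A X (n + 2) → freeSyzygy A X (n + 2)) y).2

theorem extVanishAll_iff : ExtVanishAll A X Y ↔ ∀ i, ExtZero A X Y (i + 1) := by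
  constructor
  · rintro ⟨Q, hQ, h⟩ i
    exact (hQ.exact_iff_extZero i).1 (h i)
  · intro h
    exact ⟨_, freeResolution_isProjResolution,
      fun j => (freeResolution_isProjResolution.exact_iff_extZero j).2 (h j)⟩

end Resolution

/-! ## Character modules over noncommutative rings -/

section Character

variable {S : Type u} [Ring S] {X Y Z : Type u} [AddCommGroup X] [Module S X]
    [AddCommGroup Y] [Module S Y] [AddCommGroup Z] [Module S Z]
    {N : Type u} [AddCommGroup N] [Module Sᵐᵒᵖ N]

@[simp] theorem CharacterModule.add_apply' (c c' : CharacterModule X) (x : X) :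
    (c + c') x = c x + c' x := rfl

@[simp] theorem CharacterModule.zero_apply' (x : X) : (0 : CharacterModule X) x = 0 := rfl

theorem char_ext {G : Type u} [AddCommGroup G] {c c' : CharacterModule G} (h : ∀ x, c x = c' x) :
    c = c' := DFunLike.ext _ _ h

/-- The right `S`-module structure on the character module of a left `S`-module. -/
instance CharacterModule.opModule : Module Sᵐᵒᵖ (CharacterModule X) where
  smul s c := AddMonoidHom.comp c (DistribSMul.toAddMonoidHom X s.unop)
  one_smul c := char_ext fun x => by
    show c ((1 : S) • x) = c x
    rw [one_smul]
  mul_smul s s' c := char_ext fun x => by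
    show c ((s'.unop * s.unop) • x) = c (s'.unop • s.unop • x)
    rw [mul_smul]
  smul_zero s := rfl
  smul_add s c c' := rfl
  add_smul s s' c := char_ext fun x => by
    show c ((s.unop + s'.unop) • x) = c (s.unop • x) + c (s'.unop • x)
    rw [add_smul, map_add]
  zero_smul c := char_ext fun x => by
    show c ((0 : S) • x) = 0
    rw [zero_smul, map_zero]

theorem CharacterModule.op_smul_apply (s : Sᵐᵒᵖ) (c : CharacterModule X) (x : X) :
    (s • c) x = c (s.unop • x) := rfl

/-- The `Sᵐᵒᵖ`-linear dual of an `S`-linear map. -/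
def charDual (f : X →ₗ[S] Y) : CharacterModule Y →ₗ[Sᵐᵒᵖ] CharacterModule X where
  toFun c := AddMonoidHom.comp c f.toAddMonoidHom
  map_add' c c' := rfl
  map_smul' s c := char_ext fun x => by
    show c (s.unop • f x) = c (f (s.unop • x))
    rw [map_smul f]

@[simp] theorem charDual_apply (f : X →ₗ[S] Y) (c : CharacterModule Y) (x : X) :
    charDual f c x = c (f x) := rfl

theorem exists_char_extension {G H : Type u} [AddCommGroup G] [AddCommGroup H] (f : G →+ H)
    (hf : Injective f) (c : CharacterModule G) : ∃ c' : CharacterModule H, ∀ x, c' (f x) = c x := by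
  obtain ⟨c', hc⟩ := CharacterModule.dual_surjective_of_injective f.toIntLinearMap hf c
  exact ⟨c', fun x => congrArg (fun d : CharacterModule G => d x) hc⟩

/-- A character vanishing on the kernel of a map extends along it. -/
theorem exists_char_factor {G H : Type u} [AddCommGroup G] [AddCommGroup H] (f : G →+ H)
    (c : CharacterModule G) (hc : ∀ x, f x = 0 → c x = 0) :
    ∃ c' : CharacterModule H, ∀ x, c' (f x) = c x := by
  let c1 : CharacterModule (G ⧸ f.ker) := QuotientAddGroup.lift f.ker c fun x hx => hc x hx
  obtain ⟨c', hc'⟩ := exists_char_extension (QuotientAddGroup.kerLift f)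
    (QuotientAddGroup.kerLift_injective f) c1
  exact ⟨c', fun x => hc' (x : G ⧸ f.ker)⟩

/-- Characters separate an element from a subgroup not containing it. -/
theorem mem_of_char {G H : Type u} [AddCommGroup G] [AddCommGroup H] (f : G →+ H) (y : H)
    (h : ∀ c : CharacterModule H, (∀ x, c (f x) = 0) → c y = 0) : ∃ x, f x = y := by
  have : (y : H ⧸ f.range) = 0 := by
    refine CharacterModule.eq_zero_of_character_apply fun c => ?_
    refine h (AddMonoidHom.comp c (QuotientAddGroup.mk' f.range)) fun x => ?_
    show c ((f x : H) : H ⧸ f.range) = 0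
    rw [(QuotientAddGroup.eq_zero_iff (N := f.range) (f x)).2 ⟨x, rfl⟩, map_zero]
  exact (QuotientAddGroup.eq_zero_iff y).1 this

theorem char_exact_iff {G H K : Type u} [AddCommGroup G] [AddCommGroup H] [AddCommGroup K]
    (f : G →+ H) (g : H →+ K) :
    Exact f g ↔ Exact (fun c : CharacterModule K => (AddMonoidHom.comp c g : CharacterModule H))
      (fun c : CharacterModule H => (AddMonoidHom.comp c f : CharacterModule G)) := by
  constructor
  · intro h c
    constructor
    · intro hc
      obtain ⟨c', hc'⟩ := exists_char_factor g c fun x hx => by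
        obtain ⟨y, rfl⟩ := (h x).1 hx
        exact DFunLike.congr_fun hc y
      exact ⟨c', char_ext hc'⟩
    · rintro ⟨c', rfl⟩
      refine char_ext fun x => ?_
      show c' (g (f x)) = 0
      rw [h.apply_apply_eq_zero, map_zero]
  · intro h y
    constructor
    · intro hy
      refine mem_of_char f y fun c hc => ?_
      obtain ⟨c', rfl⟩ := (h c).1 (char_ext hc)
      show c' (g y) = 0
      rw [hy, map_zero]
    · rintro ⟨x, rfl⟩
      refine CharacterModule.eq_zero_of_character_apply fun c => ?_
      exact DFunLike.congr_fun (h.apply_apply_eq_zero c) x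

theorem isSES_charDual {f : X →ₗ[S] Y} {g : Y →ₗ[S] Z} (h : IsSES f g) :
    IsSES (charDual g) (charDual f) where
  inj c c' hcc := char_ext fun z => by
    obtain ⟨y, rfl⟩ := h.surj z
    exact DFunLike.congr_fun hcc y
  surj c := by
    obtain ⟨c', hc'⟩ := exists_char_extension f.toAddMonoidHom h.inj c
    exact ⟨c', char_ext hc'⟩
  exact := (char_exact_iff f.toAddMonoidHom g.toAddMonoidHom).1 h.exact

variable (S N) in
/-- Tensor-hom adjunction for characters of `N ⊗_S X`. -/
def MTensor.charEquiv (X : Type u) [AddCommGroup X] [Module S X] :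
    CharacterModule (MTensor S N X) ≃+ (N →ₗ[Sᵐᵒᵖ] CharacterModule X) where
  toFun c :=
    { toFun := fun n => (AddMonoidHom.mk' (fun x => c (MTensor.mk n x)) fun x x' => by
        rw [← map_add]; congr 1
        show _ = ((QuotientAddGroup.mk (_ + _) : TensorProduct ℤ X N ⧸ mtRel S N X))
        rw [← TensorProduct.add_tmul]; rfl)
      map_add' := fun n n' => char_ext fun x => by
        show c (MTensor.mk (n + n') x) = c (MTensor.mk n x) + c (MTensor.mk n' x)
        rw [← map_add]; congr 1
        show _ = ((QuotientAddGroup.mk (_ + _) : TensorProduct ℤ X N ⧸ mtRel S N X))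
        rw [← TensorProduct.tmul_add]; rfl
      map_smul' := fun s n => char_ext fun x => by
        show c (MTensor.mk (s • n) x) = c (MTensor.mk n (s.unop • x))
        congr 1
        symm
        refine (QuotientAddGroup.eq_iff_sub_mem).2 ?_
        exact AddSubgroup.subset_closure ⟨s.unop, x, n, rfl⟩ }
  invFun φ := QuotientAddGroup.lift _
    (TensorProduct.liftAddHom
      (AddMonoidHom.mk' (fun x => AddMonoidHom.mk' (fun n => φ n x) fun n n' => by
          rw [map_add]; rfl) fun x x' => AddMonoidHom.ext fun n => map_add (φ n) x x')
      (fun z x n => by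
        show φ n (z • x) = φ (z • n) x
        rw [map_zsmul, map_zsmul]; rfl))
    (by
      refine (AddSubgroup.closure_le _).2 ?_
      rintro _ ⟨s, x, n, rfl⟩
      show TensorProduct.liftAddHom _ _ _ = 0
      rw [map_sub, TensorProduct.liftAddHom_tmul, TensorProduct.liftAddHom_tmul, sub_eq_zero]
      show φ n (s • x) = φ (op s • n) x
      rw [map_smul φ]; rfl)
  left_inv c := by
    refine char_ext fun z => ?_
    obtain ⟨z, rfl⟩ := QuotientAddGroup.mk_surjective z
    induction z using TensorProduct.induction_on with
    | zero => exact (map_zero _).trans (map_zero c).symm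
    | tmul x n => rfl
    | add a b ha hb =>
      exact (map_add _ (QuotientAddGroup.mk a : MTensor S N X) (QuotientAddGroup.mk b)).trans
        ((congrArg₂ _ ha hb).trans (map_add c _ _).symm)
  right_inv φ := rfl
  map_add' c c' := rfl

theorem exact_iff_of_equiv {G H K G' H' K' : Type u} [AddCommGroup G] [AddCommGroup H]
    [AddCommGroup K] [AddCommGroup G'] [AddCommGroup H'] [AddCommGroup K']
    (a : G ≃+ G') (b : H ≃+ H') (c : K ≃+ K') (f : G → H) (g : H → K) (f' : G' → H')
    (g' : H' → K') (hf : ∀ x, f' (a x) = b (f x)) (hg : ∀ x, g' (b x) = c (g x)) :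
    Exact f g ↔ Exact f' g' := by
  constructor
  · intro h y
    obtain ⟨y, rfl⟩ := b.surjective y
    rw [hg, map_eq_zero_iff c c.injective, h y]
    constructor
    · rintro ⟨x, rfl⟩; exact ⟨a x, hf x⟩
    · rintro ⟨x, hx⟩
      obtain ⟨x, rfl⟩ := a.surjective x
      exact ⟨x, b.injective (by rw [← hf, hx])⟩
  · intro h y
    rw [← map_eq_zero_iff c c.injective, ← hg, h (b y)]
    constructor
    · rintro ⟨x, hx⟩
      obtain ⟨x, rfl⟩ := a.surjective x
      exact ⟨x, b.injective (by rw [← hf, hx])⟩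
    · rintro ⟨x, rfl⟩; exact ⟨a x, hf x⟩

theorem torVanishAll_iff :
    TorVanishAll S N X ↔ ∀ i, ExtZero Sᵐᵒᵖ N (CharacterModule X) (i + 1) := by
  rw [← extVanishAll_iff]
  refine exists_congr fun Q => and_congr_right fun _ => forall_congr' fun j => ?_
  rw [char_exact_iff]
  exact exact_iff_of_equiv (MTensor.charEquiv S (Q.P j) X) (MTensor.charEquiv S (Q.P (j + 1)) X)
    (MTensor.charEquiv S (Q.P (j + 1 + 1)) X) _ _ _ _ (fun _ => rfl) (fun _ => rfl)

theorem MTensor.subsingleton_of_hom (h : ∀ φ : N →ₗ[Sᵐᵒᵖ] CharacterModule X, φ = 0) :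
    Subsingleton (MTensor S N X) := by
  refine subsingleton_of_forall_eq 0 fun z => CharacterModule.eq_zero_of_character_apply fun c => ?_
  have : c = 0 := (MTensor.charEquiv S N X).injective ((h _).trans (map_zero _).symm)
  rw [this]; rfl

end Character

/-! ## The dual of the evaluation map and a character criterion for the Bass class -/

section Bass

variable (S R : Type u) [Ring S] [Ring R]
variable (T : Type u) [AddCommGroup T] [Module S T] [Module Rᵐᵒᵖ T] [SMulCommClass S Rᵐᵒᵖ T]
variable (M : Type u) [AddCommGroup M] [Module Rᵐᵒᵖ M]

/-- The dual of the evaluation map. -/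
def nuDual (c : CharacterModule M) : (T →ₗ[Rᵐᵒᵖ] M) →ₗ[Sᵐᵒᵖ] CharacterModule T where
  toFun f := AddMonoidHom.comp c f.toAddMonoidHom
  map_add' f g := char_ext fun t => map_add c (f t) (g t)
  map_smul' _ _ := rfl

theorem bijective_iff_char {G H : Type u} [AddCommGroup G] [AddCommGroup H] (f : G →+ H) :
    Bijective f ↔ Bijective (fun c : CharacterModule H => (AddMonoidHom.comp c f :
      CharacterModule G)) := by
  constructor
  · rintro ⟨h1, h2⟩
    refine ⟨fun c c' hcc => char_ext fun y => ?_, fun c => ?_⟩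
    · obtain ⟨x, rfl⟩ := h2 y
      exact DFunLike.congr_fun hcc x
    · obtain ⟨c', hc'⟩ := exists_char_extension f h1 c
      exact ⟨c', char_ext hc'⟩
  · rintro ⟨h1, h2⟩
    refine ⟨(injective_iff_map_eq_zero f).2 fun x hx => ?_, fun y => ?_⟩
    · refine CharacterModule.eq_zero_of_character_apply fun c => ?_
      obtain ⟨c', rfl⟩ := h2 c
      show c' (f x) = 0
      rw [hx, map_zero]
    · refine mem_of_char f y fun c hc => ?_
      have : c = 0 := h1 (char_ext hc)
      rw [this]; rfl

theorem nuFun_bijective_iff :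
    Bijective (MTensor.nuFun S R T M) ↔ Bijective (nuDual S R T M) := by
  rw [bijective_iff_char]
  exact (Bijective.of_comp_iff' (MTensor.charEquiv S _ T).bijective _).symm

/-- The description of the Bass class through `Ext` and characters. -/
structure BassChar : Prop where
  ext : ∀ i, ExtZero Rᵐᵒᵖ T M (i + 1)
  tor : ∀ i, ExtZero Sᵐᵒᵖ (T →ₗ[Rᵐᵒᵖ] M) (CharacterModule T) (i + 1)
  nu : Bijective (nuDual S R T M)

theorem inBassClass_iff : InBassClass S R T M ↔ BassChar S R T M := by
  constructor
  · rintro ⟨h1, h2, h3⟩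
    exact ⟨extVanishAll_iff.1 h1, torVanishAll_iff.1 h2, (nuFun_bijective_iff S R T M).1 h3⟩
  · rintro ⟨h1, h2, h3⟩
    exact ⟨extVanishAll_iff.2 h1, torVanishAll_iff.2 h2, (nuFun_bijective_iff S R T M).2 h3⟩

end Bass

/-! ## Two out of three for the Bass class -/

section TwoOfThree

section Hom

variable (S : Type u) {A : Type u} [Ring S] [Ring A]
variable (T : Type u) [AddCommGroup T] [Module S T] [Module A T] [SMulCommClass S A T]
variable {M' M'' M : Type u} [AddCommGroup M'] [Module A M']
  [AddCommGroup M''] [Module A M''] [AddCommGroup M] [Module A M]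

/-- Functoriality of `Hom_A(T, -)`, as right `S`-modules. -/
def homMap (g : M →ₗ[A] M') : (T →ₗ[A] M) →ₗ[Sᵐᵒᵖ] (T →ₗ[A] M') where
  toFun f := g.comp f
  map_add' f f' := LinearMap.ext fun t => map_add g (f t) (f' t)
  map_smul' _ _ := rfl

@[simp] theorem homMap_apply (g : M →ₗ[A] M') (f : T →ₗ[A] M) : homMap S T g f = g.comp f := rfl

theorem isSES_homMap {f : M' →ₗ[A] M} {g : M →ₗ[A] M''} (h : IsSES f g)
    (hs : ∀ φ : T →ₗ[A] M'', ∃ ψ : T →ₗ[A] M, g.comp ψ = φ) :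
    IsSES (homMap S T f) (homMap S T g) where
  inj a b hab := LinearMap.ext fun t => h.inj (LinearMap.congr_fun hab t)
  surj := hs
  exact φ := by
    constructor
    · intro hφ
      have hr : ∀ t, φ t ∈ LinearMap.range f := fun t =>
        (h.exact (φ t)).1 (LinearMap.congr_fun hφ t)
      refine ⟨(LinearEquiv.ofInjective f h.inj).symm.toLinearMap.comp (φ.codRestrict _ hr),
        LinearMap.ext fun t => ?_⟩
      exact congrArg Subtype.val
        ((LinearEquiv.ofInjective f h.inj).apply_symm_apply (φ.codRestrict _ hr t))
    · rintro ⟨ψ, rfl⟩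
      exact LinearMap.ext fun t => h.exact.apply_apply_eq_zero (ψ t)

theorem exists_factor_of_exact {W : Type u} [AddCommGroup W] [Module A W]
    {f : M' →ₗ[A] M} {g : M →ₗ[A] M''} (h : IsSES f g)
    (φ : M →ₗ[A] W) (hφ : φ.comp f = 0) : ∃ ψ : M'' →ₗ[A] W, ψ.comp g = φ := by
  have hle : LinearMap.ker g ≤ LinearMap.ker φ := fun x hx => by
    obtain ⟨y, rfl⟩ := (h.exact x).1 hx
    exact LinearMap.congr_fun hφ y
  refine ⟨((LinearMap.ker g).liftQ φ hle).comp
    (g.quotKerEquivOfSurjective h.surj).symm.toLinearMap, LinearMap.ext fun x => ?_⟩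
  have h2 : (g.quotKerEquivOfSurjective h.surj).symm (g x) = Submodule.Quotient.mk x := by
    rw [LinearEquiv.symm_apply_eq]; rfl
  simp only [LinearMap.comp_apply, LinearEquiv.coe_coe, h2]
  rfl

end Hom

variable {S R : Type u} [Ring S] [Ring R]
variable {T : Type u} [AddCommGroup T] [Module S T] [Module Rᵐᵒᵖ T] [SMulCommClass S Rᵐᵒᵖ T]
variable {M' M'' M : Type u} [AddCommGroup M'] [Module Rᵐᵒᵖ M']
  [AddCommGroup M''] [Module Rᵐᵒᵖ M''] [AddCommGroup M] [Module Rᵐᵒᵖ M]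

/-- The dual of the evaluation map is natural. -/
theorem nuDual_comp (g : M →ₗ[Rᵐᵒᵖ] M'') (c : CharacterModule M'') :
    nuDual S R T M (AddMonoidHom.comp c g.toAddMonoidHom) =
      (nuDual S R T M'' c).comp (homMap S T g) := rfl

theorem nuDual_add (c c' : CharacterModule M) :
    nuDual S R T M (c + c') = nuDual S R T M c + nuDual S R T M c' := rfl

theorem nuDual_eq_zero (h : Injective (nuDual S R T M)) {c : CharacterModule M}
    (hc : nuDual S R T M c = 0) : c = 0 := h hc

theorem nuDual_injective_of (h : ∀ c, nuDual S R T M c = 0 → c = 0) :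
    Injective (nuDual S R T M) :=
  (injective_iff_map_eq_zero (AddMonoidHom.mk' (nuDual S R T M) nuDual_add)).2 h

section

variable {f : M' →ₗ[Rᵐᵒᵖ] M} {g : M →ₗ[Rᵐᵒᵖ] M''}

theorem IsSES.nu_third (h : IsSES f g) (hs : ∀ φ : T →ₗ[Rᵐᵒᵖ] M'', ∃ ψ : T →ₗ[Rᵐᵒᵖ] M, g.comp ψ = φ)
    (h' : Injective (nuDual S R T M')) (hM : Bijective (nuDual S R T M)) :
    Bijective (nuDual S R T M'') := by
  have hF := isSES_homMap S T h hs
  refine ⟨nuDual_injective_of fun c hc => ?_, fun ψ => ?_⟩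
  · have h1 : nuDual S R T M (AddMonoidHom.comp c g.toAddMonoidHom) = 0 := by
      rw [nuDual_comp, hc, LinearMap.zero_comp]
    have h2 := nuDual_eq_zero hM.1 h1
    refine char_ext fun x => ?_
    obtain ⟨y, rfl⟩ := h.surj x
    exact DFunLike.congr_fun h2 y
  · obtain ⟨c, hc⟩ := hM.2 (ψ.comp (homMap S T g))
    have h1 : nuDual S R T M' (AddMonoidHom.comp c f.toAddMonoidHom) = 0 := by
      rw [nuDual_comp, hc]
      refine LinearMap.ext fun x => ?_
      show ψ (homMap S T g (homMap S T f x)) = 0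
      rw [hF.exact.apply_apply_eq_zero, map_zero]
    have h2 := nuDual_eq_zero h' h1
    obtain ⟨c', hc'⟩ := ((char_exact_iff f.toAddMonoidHom g.toAddMonoidHom).1 h.exact c).1 h2
    refine ⟨c', LinearMap.ext fun x => ?_⟩
    obtain ⟨y, rfl⟩ := hF.surj x
    have := LinearMap.congr_fun hc y
    rw [← hc'] at this
    exact this

theorem IsSES.nu_first_injective (h : IsSES f g)
    (hs : ∀ φ : T →ₗ[Rᵐᵒᵖ] M'', ∃ ψ : T →ₗ[Rᵐᵒᵖ] M, g.comp ψ = φ)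
    (hM : Injective (nuDual S R T M)) (h'' : Surjective (nuDual S R T M'')) :
    Injective (nuDual S R T M') := by
  have hF := isSES_homMap S T h hs
  refine nuDual_injective_of fun c hc => ?_
  obtain ⟨c', hc'⟩ := exists_char_extension f.toAddMonoidHom h.inj c
  obtain rfl : (AddMonoidHom.comp c' f.toAddMonoidHom : CharacterModule M') = c := char_ext hc'
  rw [nuDual_comp] at hc
  obtain ⟨ψ, hψ⟩ := exists_factor_of_exact hF _ hc
  obtain ⟨d, rfl⟩ := h'' ψ
  have h1 : (AddMonoidHom.comp d g.toAddMonoidHom : CharacterModule M) = c' := hM hψ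
  rw [← h1]
  refine char_ext fun x => ?_
  show d (g (f x)) = 0
  rw [h.exact.apply_apply_eq_zero, map_zero]

theorem IsSES.nu_first_surjective (h : IsSES f g)
    (hs : ∀ φ : T →ₗ[Rᵐᵒᵖ] M'', ∃ ψ : T →ₗ[Rᵐᵒᵖ] M, g.comp ψ = φ)
    (hM : Surjective (nuDual S R T M))
    (h'' : ExtZero Sᵐᵒᵖ (T →ₗ[Rᵐᵒᵖ] M'') (CharacterModule T) 1) :
    Surjective (nuDual S R T M') := by
  intro ψ
  obtain ⟨ψ', rfl⟩ := (isSES_homMap S T h hs).exists_extension h'' ψ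
  obtain ⟨c, rfl⟩ := hM ψ'
  exact ⟨_, nuDual_comp f c⟩

/-- The Bass class is closed under cokernels of monomorphisms. -/
theorem BassChar.third (h : IsSES f g) (h' : BassChar S R T M') (hM : BassChar S R T M) :
    BassChar S R T M'' := by
  have hs := fun φ : T →ₗ[Rᵐᵒᵖ] M'' => h.exists_lift (h'.ext 0) φ
  have hF := isSES_homMap S T h hs
  refine ⟨fun i => h.ext_third_right (h'.ext (i + 1)) (hM.ext i), fun i => ?_,
    h.nu_third hs h'.nu.1 hM.nu⟩
  cases i with
  | zero =>
    refine hF.extZero_one_of_extension (hM.tor 0) fun φ => ?_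
    obtain ⟨c, rfl⟩ := h'.nu.2 φ
    obtain ⟨c', hc'⟩ := exists_char_extension f.toAddMonoidHom h.inj c
    obtain rfl : (AddMonoidHom.comp c' f.toAddMonoidHom : CharacterModule M') = c := char_ext hc'
    exact ⟨_, (nuDual_comp f c').symm⟩
  | succ i => exact hF.ext_third_left (h'.tor i) (hM.tor (i + 1))

/-- The Bass class is closed under kernels of epimorphisms that remain epimorphisms after
applying `Hom(T, -)`. -/
theorem BassChar.first (h : IsSES f g)
    (hs : ∀ φ : T →ₗ[Rᵐᵒᵖ] M'', ∃ ψ : T →ₗ[Rᵐᵒᵖ] M, g.comp ψ = φ)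
    (hM : BassChar S R T M) (h'' : BassChar S R T M'') : BassChar S R T M' := by
  have hF := isSES_homMap S T h hs
  refine ⟨fun i => ?_, fun i => hF.ext_first_left (hM.tor i) (h''.tor (i + 1)),
    h.nu_first_injective hs hM.nu.1 h''.nu.2, h.nu_first_surjective hs hM.nu.2 (h''.tor 0)⟩
  cases i with
  | zero => exact h.extZero_one_of_lift (hM.ext 0) hs
  | succ i => exact h.ext_first_right (hM.ext (i + 1)) (h''.ext i)

theorem BassChar.lift_of_faithful (h : IsSES f g) (htf : IsTensorlyFaithful S R T)
    (hM : BassChar S R T M) (h'' : BassChar S R T M'') (φ : T →ₗ[Rᵐᵒᵖ] M'') :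
    ∃ ψ : T →ₗ[Rᵐᵒᵖ] M, g.comp ψ = φ := by
  have : Subsingleton ((T →ₗ[Rᵐᵒᵖ] M'') ⧸ LinearMap.range (homMap S T g)) := by
    refine htf.2 _ (MTensor.subsingleton_of_hom fun φ => ?_)
    obtain ⟨c, hc⟩ := h''.nu.2 (φ.comp (Submodule.mkQ _))
    have h1 : nuDual S R T M (AddMonoidHom.comp c g.toAddMonoidHom) = 0 := by
      rw [nuDual_comp, hc, LinearMap.comp_assoc, LinearMap.range_mkQ_comp, LinearMap.comp_zero]
    have h2 := nuDual_eq_zero hM.nu.1 h1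
    have h3 : c = 0 := char_ext fun x => by
      obtain ⟨y, rfl⟩ := h.surj x
      exact DFunLike.congr_fun h2 y
    refine LinearMap.ext fun x => ?_
    obtain ⟨y, rfl⟩ := Submodule.mkQ_surjective _ x
    have h4 := LinearMap.congr_fun hc y
    rw [h3] at h4
    exact h4.symm
  have := Submodule.Quotient.subsingleton_iff.1 this
  exact LinearMap.range_eq_top.1 this φ

/-- If `T` is tensorly faithful, the Bass class is closed under kernels of epimorphisms. -/
theorem BassChar.first_of_faithful (h : IsSES f g) (htf : IsTensorlyFaithful S R T)
    (hM : BassChar S R T M) (h'' : BassChar S R T M'') : BassChar S R T M' :=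
  BassChar.first h (BassChar.lift_of_faithful h htf hM h'') hM h''

end

end TwoOfThree

/-! ## Coherence and finiteness -/

section Coherence

variable {S : Type u} [Ring S]

/-- Every finitely generated module embedding into `X` is finitely presented. -/
def FGSubmodulesFP (S : Type u) [Ring S] (X : Type u) [AddCommGroup X] [Module S X] : Prop :=
  ∀ (N : Type u) [AddCommGroup N] [Module S N], Module.Finite S N →
    ∀ i : N →ₗ[S] X, Injective i → Module.FinitePresentation S N

theorem FGSubmodulesFP.prod {X Y : Type u} [AddCommGroup X] [Module S X] [AddCommGroup Y]
    [Module S Y] (hX : FGSubmodulesFP S X) (hY : FGSubmodulesFP S Y) : FGSubmodulesFP S (X × Y) := by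
  intro N _ _ hN i hi
  let g := ((LinearMap.snd S X Y).comp i).rangeRestrict
  have hg : Surjective g := LinearMap.surjective_rangeRestrict _
  have : Module.FinitePresentation S (LinearMap.range ((LinearMap.snd S X Y).comp i)) :=
    hY _ (Module.Finite.of_surjective g hg) (Submodule.subtype _) Subtype.val_injective
  have hk : Module.Finite S (LinearMap.ker g) := .of_fg (Module.FinitePresentation.fg_ker g hg)
  have : Module.FinitePresentation S (LinearMap.ker g) := by
    refine hX _ hk (((LinearMap.fst S X Y).comp i).comp (Submodule.subtype _)) ?_
    intro a b hab
    refine Subtype.ext (hi (Prod.ext hab ?_))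
    have ha : (i a).2 = 0 := congrArg Subtype.val a.2
    have hb : (i b).2 = 0 := congrArg Subtype.val b.2
    rw [ha, hb]
  exact Module.finitePresentation_of_ker g hg

theorem FGSubmodulesFP.of_injective {X Y : Type u} [AddCommGroup X] [Module S X] [AddCommGroup Y]
    [Module S Y] (hY : FGSubmodulesFP S Y) (e : X →ₗ[S] Y) (he : Injective e) :
    FGSubmodulesFP S X :=
  fun N _ _ hN i hi => hY N hN (e.comp i) (he.comp hi)

theorem IsLeftCoherentRing.fgSubmodulesFP (hS : IsLeftCoherentRing S) (n : ℕ) :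
    FGSubmodulesFP S (Fin n → S) := by
  induction n with
  | zero =>
    intro N _ _ _ i hi
    have : Subsingleton N := hi.subsingleton
    exact Module.finitePresentation_of_projective S N
  | succ n ih =>
    have h1 : FGSubmodulesFP S S := by
      intro N _ _ hN i hi
      have := hS (LinearMap.range i) (Module.Finite.iff_fg.1 inferInstance)
      exact Module.FinitePresentation.of_equiv (LinearEquiv.ofInjective i hi).symm
    refine (h1.prod ih).of_injective
      ((LinearMap.proj 0).prod (LinearMap.pi fun j => LinearMap.proj j.succ)) ?_
    intro a b hab
    refine funext fun j => ?_
    refine Fin.cases ?_ (fun j => ?_) j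
    · exact congrArg Prod.fst hab
    · exact congrFun (congrArg Prod.snd hab) j

/-- Over a coherent ring, finitely presented modules have finitely presented syzygies. -/
theorem IsLeftCoherentRing.exists_syzygy (hS : IsLeftCoherentRing S) (X : Type u) [AddCommGroup X]
    [Module S X] [Module.FinitePresentation S X] :
    ∃ (n : ℕ) (q : (Fin n → S) →ₗ[S] X), Surjective q ∧
      Module.FinitePresentation S (LinearMap.ker q) := by
  obtain ⟨n, q, hq⟩ := Module.Finite.exists_fin' S X
  exact ⟨n, q, hq, hS.fgSubmodulesFP n _ (.of_fg (Module.FinitePresentation.fg_ker q hq))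
    (Submodule.subtype _) Subtype.val_injective⟩

theorem IsRightNoetherianRing.isNoetherianRing {R : Type u} [Ring R]
    (h : IsRightNoetherianRing R) : IsNoetherianRing Rᵐᵒᵖ := by
  have : IsNoetherian Rᵐᵒᵖ R := ⟨h⟩
  let e : R ≃ₗ[Rᵐᵒᵖ] Rᵐᵒᵖ :=
    { opAddEquiv with map_smul' := fun _ _ => rfl }
  exact isNoetherian_of_linearEquiv e

theorem HasFGProjResolution.finitePresentation {X : Type u} [AddCommGroup X]
    [Module S X] (h : HasFGProjResolution S X) : Module.FinitePresentation S X := by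
  obtain ⟨Q, hQ, hfin⟩ := h
  have := hfin 0
  have := hfin 1
  have := hQ.proj 0
  have : Module.FinitePresentation S (Q.P 0) := Module.finitePresentation_of_projective _ _
  refine Module.finitePresentation_of_surjective Q.ε hQ.surj ?_
  rw [hQ.exact0.linearMap_ker_eq]
  exact Module.Finite.iff_fg.1 inferInstance

end Coherence

/-! ## Injective modules and injective dimension -/

section Injective

variable {A : Type u} [Ring A]

theorem exists_injective_embedding (Y : Type u) [AddCommGroup Y] [Module A Y] :
    ∃ (E : ModuleCat.{u} A) (f : Y →ₗ[A] E), Injective f ∧ Module.Injective A E :=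
  ⟨CategoryTheory.Injective.under (ModuleCat.of A Y),
    (CategoryTheory.Injective.ι (ModuleCat.of A Y)).hom,
    (ModuleCat.mono_iff_injective _).1 inferInstance,
    @Module.injective_module_of_injective_object A _ _ _ _
      (CategoryTheory.Injective.injective_under (ModuleCat.of A Y))⟩

theorem exists_extension_of_injective {X Y E : Type u} [AddCommGroup X] [Module A X]
    [AddCommGroup Y] [Module A Y] [AddCommGroup E] [Module A E] (hE : Module.Injective A E)
    (f : X →ₗ[A] Y) (hf : Injective f) (φ : X →ₗ[A] E) : ∃ ψ : Y →ₗ[A] E, ψ.comp f = φ := by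
  obtain ⟨ψ, hψ⟩ := hE.out f hf φ
  exact ⟨ψ, LinearMap.ext hψ⟩

theorem injDimLE_extZero {n : ℕ} {Y : ModuleCat.{u} A}
    (h : HasClassCoresolution A (fun E => Module.Injective A E) n Y)
    (X : Type u) [AddCommGroup X] [Module A X] (j : ℕ) : ExtZero A X Y (n + j + 1) := by
  induction n generalizing Y j with
  | zero => exact extZero_of_injective h _
  | succ n ih =>
    obtain ⟨m, hm, hr⟩ := h
    have h1 := ih hr j
    have h2 : ExtZero A X m.E (n + j + 1 + 1) := extZero_of_injective hm _
    have := (IsSES.of_injective m.inj).ext_first_right h2 h1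
    rwa [show n + 1 + j + 1 = n + j + 1 + 1 by omega]

theorem injective_of_extZero {Y : Type u} [AddCommGroup Y] [Module A Y]
    (h : ∀ (X : Type u) [AddCommGroup X] [Module A X], Module.Finite A X → ExtZero A X Y 1) :
    Module.Injective A Y := by
  refine Module.Baer.injective fun I g => ?_
  have hs : IsSES I.subtype I.mkQ :=
    ⟨Subtype.val_injective, Submodule.mkQ_surjective _, LinearMap.exact_subtype_mkQ I⟩
  obtain ⟨ψ, hψ⟩ := hs.exists_extension (h (A ⧸ I) inferInstance) g
  exact ⟨ψ, fun x hx => LinearMap.congr_fun hψ ⟨x, hx⟩⟩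

theorem extZero_of_forall_finite (n : ℕ) {Y : Type u} [AddCommGroup Y] [Module A Y]
    (h : ∀ (X : Type u) [AddCommGroup X] [Module A X], Module.Finite A X → ExtZero A X Y (n + 1))
    (X : Type u) [AddCommGroup X] [Module A X] (j : ℕ) : ExtZero A X Y (n + j + 1) := by
  induction n generalizing Y j with
  | zero => exact extZero_of_injective (injective_of_extZero h) _
  | succ n ih =>
    obtain ⟨E, f, hf, hE⟩ := exists_injective_embedding (A := A) Y
    have hs := IsSES.of_injective hf
    have h1 := hs.ext_first_right (extZero_of_injective hE (n + j + 1))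
      (ih (fun X _ _ hX => hs.ext_third_right (h X hX) (extZero_of_injective hE n)) j)
    rwa [show n + 1 + j + 1 = n + j + 1 + 1 by omega]

theorem injective_char_free (S : Type u) [Ring S] (n : ℕ) :
    Module.Injective Sᵐᵒᵖ (CharacterModule (Fin n → S)) where
  out X Y _ _ _ _ f hf g := by
    have hc (i : Fin n) := exists_char_extension f.toAddMonoidHom hf
      (AddMonoidHom.mk' (fun x => g x (Pi.single i 1)) fun x x' => by rw [map_add]; rfl)
    choose c hc using hc
    refine ⟨{ toFun := fun y => AddMonoidHom.mk' (fun v => ∑ i, c i (op (v i) • y)) fun v v' => by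
                simp only [Pi.add_apply, op_add, add_smul, map_add, Finset.sum_add_distrib]
              map_add' := fun y y' => char_ext fun v => by
                show ∑ i, c i (op (v i) • (y + y')) =
                  ∑ i, c i (op (v i) • y) + ∑ i, c i (op (v i) • y')
                simp only [smul_add, map_add, Finset.sum_add_distrib]
              map_smul' := fun s y => char_ext fun v => by
                show ∑ i, c i (op (v i) • s • y) = ∑ i, c i (op ((s.unop • v) i) • y)
                refine Finset.sum_congr rfl fun i _ => ?_
                rw [smul_smul]; rfl }, fun x => char_ext fun v => ?_⟩
    show ∑ i, c i (op (v i) • f x) = g x v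
    have h1 (i : Fin n) : c i (op (v i) • f x) = g x (Pi.single i (v i)) := by
      rw [← map_smul f]
      refine (hc i _).trans ?_
      show g (op (v i) • x) (Pi.single i 1) = _
      rw [map_smul g, CharacterModule.op_smul_apply, unop_op, ← Pi.single_smul, smul_eq_mul, mul_one]
    simp only [h1]
    rw [← map_sum, Finset.univ_sum_single]

end Injective

/-! ## Homs into a bimodule and injective coefficients -/

section HomPre

variable {B C : Type u} [Ring B] [Ring C] (T : Type u) [AddCommGroup T] [Module B T] [Module C T]
  [SMulCommClass B C T] {X Y Z : Type u} [AddCommGroup X] [Module B X] [AddCommGroup Y]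
  [Module B Y] [AddCommGroup Z] [Module B Z]

variable (C) in
/-- Functoriality of `Hom_B(-, T)`, as `C`-modules. -/
def homPre (q : X →ₗ[B] Y) : (Y →ₗ[B] T) →ₗ[C] (X →ₗ[B] T) where
  toFun φ := φ.comp q
  map_add' _ _ := rfl
  map_smul' _ _ := rfl

variable (B C) in
/-- Evaluation at `x`. -/
def evAt (x : X) : (X →ₗ[B] T) →ₗ[C] T where
  toFun φ := φ x
  map_add' _ _ := rfl
  map_smul' _ _ := rfl

theorem homPre_surjective {f : X →ₗ[B] Y} {g : Y →ₗ[B] Z} (h : IsSES f g)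
    (h1 : ExtZero B Z T 1) : Surjective (homPre C T f) :=
  fun φ => h.exists_extension h1 φ

end HomPre

section Alpha

variable {S A : Type u} [Ring S] [Ring A]
variable {T : Type u} [AddCommGroup T] [Module S T] [Module A T] [SMulCommClass S A T]
variable {E : Type u} [AddCommGroup E] [Module A E]
variable {X Y Z : Type u} [AddCommGroup X] [Module S X] [AddCommGroup Y] [Module S Y]
  [AddCommGroup Z] [Module S Z]

/-- The dual of the evaluation map `Hom_A(T, E) ⊗_S X → Hom_A(Hom_S(X, T), E)`. -/
def alphaDual (c : CharacterModule ((X →ₗ[S] T) →ₗ[A] E)) :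
    (T →ₗ[A] E) →ₗ[Sᵐᵒᵖ] CharacterModule X where
  toFun h := AddMonoidHom.mk' (fun x => c (h.comp (evAt S A T x))) fun x x' => by
    rw [← map_add]; congr 1; ext φ
    show h (φ (x + x')) = h (φ x) + h (φ x')
    rw [map_add, map_add]
  map_add' h h' := char_ext fun x => map_add c (h.comp (evAt S A T x)) (h'.comp (evAt S A T x))
  map_smul' s h := char_ext fun x => by
    show c ((s • h).comp (evAt S A T x)) = c (h.comp (evAt S A T (s.unop • x)))
    congr 1; ext φ
    show h (s.unop • φ x) = h (φ (s.unop • x))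
    rw [map_smul φ]

/-- Precomposition with `Hom_S(q, T)`. -/
def homHomPre (q : X →ₗ[S] Y) : ((X →ₗ[S] T) →ₗ[A] E) →+ ((Y →ₗ[S] T) →ₗ[A] E) where
  toFun ψ := ψ.comp (homPre A T q)
  map_zero' := rfl
  map_add' _ _ := rfl

theorem alphaDual_natural (q : X →ₗ[S] Y) (c : CharacterModule ((Y →ₗ[S] T) →ₗ[A] E)) :
    (charDual q).comp (alphaDual c) = alphaDual (AddMonoidHom.comp c (homHomPre q)) := rfl

variable (S A T) in
/-- The inclusion of the `i`-th coordinate in `Hom_S(S^n, T) ≅ T^n`. -/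
def coordHom {n : ℕ} (i : Fin n) : T →ₗ[A] ((Fin n → S) →ₗ[S] T) where
  toFun t := (LinearMap.toSpanSingleton S T t).comp (LinearMap.proj i)
  map_add' t t' := LinearMap.ext fun v => smul_add (v i) t t'
  map_smul' a t := LinearMap.ext fun v => smul_comm (v i) a t

theorem sum_coordHom {n : ℕ} (φ : (Fin n → S) →ₗ[S] T) :
    ∑ i, coordHom S A T i (φ (Pi.single i 1)) = φ := by
  refine LinearMap.ext fun v => ?_
  rw [LinearMap.sum_apply]
  conv_rhs => rw [← Finset.univ_sum_single v, map_sum]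
  refine Finset.sum_congr rfl fun i _ => ?_
  show v i • φ (Pi.single i 1) = _
  rw [← map_smul, ← Pi.single_smul, smul_eq_mul, mul_one]

theorem alphaDual_free_injective {n : ℕ} {c : CharacterModule (((Fin n → S) →ₗ[S] T) →ₗ[A] E)}
    (hc : alphaDual c = 0) : c = 0 := by
  refine char_ext fun ψ => ?_
  have h1 : ψ = ∑ i, (ψ.comp (coordHom S A T i)).comp (evAt S A T (Pi.single i 1)) := by
    refine LinearMap.ext fun φ => ?_
    rw [LinearMap.sum_apply]
    conv_lhs => rw [← sum_coordHom (A := A) φ, map_sum]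
    rfl
  rw [h1, map_sum]
  exact Finset.sum_eq_zero fun i _ =>
    DFunLike.congr_fun (LinearMap.congr_fun hc (ψ.comp (coordHom S A T i))) (Pi.single i 1)

theorem alphaDual_free_surjective {n : ℕ} (h : (T →ₗ[A] E) →ₗ[Sᵐᵒᵖ] CharacterModule (Fin n → S)) :
    ∃ c : CharacterModule (((Fin n → S) →ₗ[S] T) →ₗ[A] E), alphaDual c = h := by
  refine ⟨AddMonoidHom.mk' (fun ψ => ∑ i, h (ψ.comp (coordHom S A T i)) (Pi.single i 1))
    fun ψ ψ' => ?_, LinearMap.ext fun f => char_ext fun v => ?_⟩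
  · rw [← Finset.sum_add_distrib]
    refine Finset.sum_congr rfl fun i _ => ?_
    rw [LinearMap.add_comp, map_add]
    rfl
  · show ∑ i, h ((f.comp (evAt S A T v)).comp (coordHom S A T i)) (Pi.single i 1) = h f v
    conv_rhs => rw [← Finset.univ_sum_single v, map_sum]
    refine Finset.sum_congr rfl fun i _ => ?_
    have : (f.comp (evAt S A T v)).comp (coordHom S A T i) = op (v i) • f := rfl
    rw [this, map_smul h, CharacterModule.op_smul_apply, ← Pi.single_smul, smul_eq_mul, unop_op,
      mul_one]

theorem alphaDual_surjective (hE : Module.Injective A E) [Module.FinitePresentation S X]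
    (h : (T →ₗ[A] E) →ₗ[Sᵐᵒᵖ] CharacterModule X) :
    ∃ c : CharacterModule ((X →ₗ[S] T) →ₗ[A] E), alphaDual c = h := by
  obtain ⟨n, q, hq⟩ := Module.Finite.exists_fin' S X
  have : Module.Finite S (LinearMap.ker q) := .of_fg (Module.FinitePresentation.fg_ker q hq)
  obtain ⟨m, p, hp⟩ := Module.Finite.exists_fin' S (LinearMap.ker q)
  let p' : (Fin m → S) →ₗ[S] (Fin n → S) := (LinearMap.ker q).subtype.comp p
  have hqp : ∀ x, q (p' x) = 0 := fun x => (p x).2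
  obtain ⟨c, hc⟩ := alphaDual_free_surjective ((charDual q).comp h)
  have hc2 : (AddMonoidHom.comp c (homHomPre p') :
      CharacterModule (((Fin m → S) →ₗ[S] T) →ₗ[A] E)) = 0 := by
    apply alphaDual_free_injective
    rw [← alphaDual_natural, hc]
    refine LinearMap.ext fun f => char_ext fun x => ?_
    show h f (q (p' x)) = 0
    rw [hqp, map_zero]
  obtain ⟨c', hc'⟩ := exists_char_factor (homHomPre (A := A) (E := E) (T := T) q) c (by
    intro ψ hψ
    have hker : LinearMap.ker (homPre A T p') ≤ LinearMap.ker ψ := by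
      intro φ hφ
      obtain ⟨φ', hφ'⟩ := exists_factor_of_exact (IsSES.of_surjective hq) φ (by
        refine LinearMap.ext fun x => ?_
        obtain ⟨y, rfl⟩ := hp x
        exact LinearMap.congr_fun hφ y)
      rw [← hφ']
      exact LinearMap.congr_fun hψ φ'
    obtain ⟨ψ', hψ'⟩ := exists_extension_of_injective hE
      ((LinearMap.ker (homPre A T p')).liftQ (homPre A T p') le_rfl)
      (LinearMap.ker_eq_bot.1 (Submodule.ker_liftQ_eq_bot _ _ _ le_rfl))
      ((LinearMap.ker (homPre A T p')).liftQ ψ hker)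
    have : homHomPre p' ψ' = ψ := LinearMap.ext fun φ =>
      LinearMap.congr_fun hψ' (Submodule.Quotient.mk φ)
    rw [← this]
    exact DFunLike.congr_fun hc2 ψ')
  refine ⟨c', LinearMap.ext fun f => char_ext fun x => ?_⟩
  obtain ⟨y, rfl⟩ := hq x
  have h1 : alphaDual c' f (q y) = alphaDual c f y := hc' (f.comp (evAt S A T y))
  rw [h1, hc]
  rfl

theorem extZero_char_of_injective_one (hE : Module.Injective A E) (hS : IsLeftCoherentRing S)
    [Module.FinitePresentation S X] (h1 : ExtZero S X T 1) :
    ExtZero Sᵐᵒᵖ (T →ₗ[A] E) (CharacterModule X) 1 := by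
  obtain ⟨n, q, hq, hfp⟩ := hS.exists_syzygy X
  have hs := IsSES.of_surjective hq
  refine (isSES_charDual hs).extZero_one_of_lift
    (extZero_of_injective (injective_char_free S n) 0) fun h => ?_
  obtain ⟨c, rfl⟩ := alphaDual_surjective hE h
  obtain ⟨c', hc'⟩ := exists_char_extension
    (homHomPre (A := A) (E := E) (T := T) (LinearMap.ker q).subtype) (fun ψ ψ' hψ => by
      refine LinearMap.ext fun φ => ?_
      obtain ⟨φ, rfl⟩ := homPre_surjective (C := A) T hs h1 φ
      exact LinearMap.congr_fun hψ φ) c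
  refine ⟨alphaDual c', ?_⟩
  rw [alphaDual_natural]
  exact congrArg _ (char_ext hc')

theorem extZero_char_of_injective (hE : Module.Injective A E) (hS : IsLeftCoherentRing S) (i : ℕ)
    (X : Type u) [AddCommGroup X] [Module S X] [Module.FinitePresentation S X]
    (h1 : ExtZero S X T (i + 1)) : ExtZero Sᵐᵒᵖ (T →ₗ[A] E) (CharacterModule X) (i + 1) := by
  induction i generalizing X with
  | zero => exact extZero_char_of_injective_one hE hS h1
  | succ i ih =>
    obtain ⟨n, q, hq, hfp⟩ := hS.exists_syzygy X
    have hs := IsSES.of_surjective hq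
    exact (isSES_charDual hs).ext_first_right
      (extZero_of_injective (injective_char_free S n) (i + 1))
      (ih _ (hs.ext_first_left (extZero_of_projective inferInstance i) h1))

end Alpha

/-! ## Injective modules and sums of copies of `T` lie in the Bass class -/

section Finsupp

variable {A : Type u} [Ring A]

theorem IsNoetherianRing.exists_syzygy [IsNoetherianRing A] (X : Type u) [AddCommGroup X]
    [Module A X] [Module.Finite A X] :
    ∃ (n : ℕ) (q : (Fin n → A) →ₗ[A] X), Surjective q ∧ Module.Finite A (LinearMap.ker q) := by
  obtain ⟨n, q, hq⟩ := Module.Finite.exists_fin' A X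
  exact ⟨n, q, hq, inferInstance⟩

variable {I : Type u} {T : Type u} [AddCommGroup T] [Module A T]

theorem exists_support_of_finite {X : Type u} [AddCommGroup X] [Module A X] [Module.Finite A X]
    (f : X →ₗ[A] (I →₀ T)) : ∃ s : Finset I, ∀ x, (f x).support ⊆ s := by
  classical
  obtain ⟨n, q, hq⟩ := Module.Finite.exists_fin' A X
  refine ⟨Finset.univ.biUnion fun k : Fin n => (f (q (Pi.single k 1))).support, fun x i hi => ?_⟩
  by_contra hn
  obtain ⟨v, rfl⟩ := hq x
  have h0 : ((Finsupp.lapply i).comp f).comp q = 0 := by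
    refine LinearMap.pi_ext' fun k => LinearMap.ext_ring ?_
    have : i ∉ (f (q (Pi.single k 1))).support := fun h =>
      hn (Finset.mem_biUnion.2 ⟨k, Finset.mem_univ k, h⟩)
    exact Finsupp.notMem_support_iff.1 this
  exact Finsupp.mem_support_iff.1 hi (LinearMap.congr_fun h0 v)

/-- Assembling finitely many nonzero components into a map to a direct sum. -/
def toFinsupp {X : Type u} [AddCommGroup X] [Module A X] (s : Finset I) (f : I → (X →ₗ[A] T)) :
    X →ₗ[A] (I →₀ T) :=
  ∑ i ∈ s, (Finsupp.lsingle i).comp (f i)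

theorem toFinsupp_apply {X : Type u} [AddCommGroup X] [Module A X] {s : Finset I}
    {f : I → (X →ₗ[A] T)} {i : I} (hi : i ∈ s) (x : X) : toFinsupp s f x i = f i x := by
  classical
  simp [toFinsupp, Finsupp.finsetSum_apply, Finsupp.single_apply, hi]

theorem toFinsupp_apply_notMem {X : Type u} [AddCommGroup X] [Module A X] {s : Finset I}
    {f : I → (X →ₗ[A] T)} {i : I} (hi : i ∉ s) (x : X) : toFinsupp s f x i = 0 := by
  classical
  simp [toFinsupp, Finsupp.finsetSum_apply, Finsupp.single_apply, hi]

theorem extZero_finsupp [IsNoetherianRing A] (I : Type u) (i : ℕ) (X : Type u) [AddCommGroup X]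
    [Module A X] [Module.Finite A X] (h : ExtZero A X T (i + 1)) :
    ExtZero A X (I →₀ T) (i + 1) := by
  obtain ⟨n, q, hq, hfin⟩ := IsNoetherianRing.exists_syzygy (A := A) X
  have hs := IsSES.of_surjective hq
  induction i generalizing X n with
  | zero =>
    refine hs.extZero_one_of_extension (extZero_of_projective inferInstance 0) fun φ => ?_
    obtain ⟨s, hsupp⟩ := exists_support_of_finite φ
    choose ψ hψ using fun i => hs.exists_extension h ((Finsupp.lapply i).comp φ)
    refine ⟨toFinsupp s ψ, LinearMap.ext fun x => Finsupp.ext fun i => ?_⟩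
    by_cases hi : i ∈ s
    · exact (toFinsupp_apply hi _).trans (LinearMap.congr_fun (hψ i) x)
    · refine (toFinsupp_apply_notMem hi _).trans (Eq.symm ?_)
      exact Finsupp.notMem_support_iff.1 fun h => hi (hsupp x h)
  | succ i ih =>
    obtain ⟨m, p, hp, hfin'⟩ := IsNoetherianRing.exists_syzygy (A := A) (LinearMap.ker q)
    exact hs.ext_third_left (ih _ (hs.ext_first_left (extZero_of_projective inferInstance i) h)
      m p hp hfin' (IsSES.of_surjective hp)) (extZero_of_projective inferInstance _)

end Finsupp

section Members

variable {S R : Type u} [Ring S] [Ring R]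
variable {T : Type u} [AddCommGroup T] [Module S T] [Module Rᵐᵒᵖ T] [SMulCommClass S Rᵐᵒᵖ T]

theorem nuDual_bijective_of_injective (hW : IsWakamatsuTilting S R T) {E : Type u} [AddCommGroup E]
    [Module Rᵐᵒᵖ E] (hE : Module.Injective Rᵐᵒᵖ E) : Bijective (nuDual S R T E) := by
  have hfp : Module.FinitePresentation S T := hW.fgProjResS.finitePresentation
  refine ⟨nuDual_injective_of fun c hc => char_ext fun e => ?_, fun h => ?_⟩
  · obtain ⟨n, q, hq⟩ := Module.Finite.exists_fin' S T
    let t : Fin n → T := fun i => q (Pi.single i 1)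
    have hinj : Injective (LinearMap.toSpanSingleton Rᵐᵒᵖ (Fin n → T) t) := by
      refine (injective_iff_map_eq_zero _).2 fun a ha => ?_
      have h0 : (rightHomothety S R T a.unop).comp q = 0 := by
        refine LinearMap.pi_ext' fun k => LinearMap.ext_ring ?_
        exact congrFun ha k
      have h1 : rightHomothety S R T a.unop = rightHomothety S R T 0 := by
        refine LinearMap.ext fun x => ?_
        obtain ⟨y, rfl⟩ := hq x
        refine (LinearMap.congr_fun h0 y).trans ?_
        exact (zero_smul Rᵐᵒᵖ (q y)).symm
      exact unop_injective (hW.bijR.1 h1)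
    obtain ⟨ψ, hψ⟩ := exists_extension_of_injective hE _ hinj (LinearMap.toSpanSingleton Rᵐᵒᵖ E e)
    have he : e = ∑ i, ψ (Pi.single i (t i)) := by
      rw [← map_sum, Finset.univ_sum_single]
      have := LinearMap.congr_fun hψ 1
      simpa using this.symm
    rw [he, map_sum]
    exact Finset.sum_eq_zero fun i _ =>
      DFunLike.congr_fun (LinearMap.congr_fun hc (ψ.comp (LinearMap.single Rᵐᵒᵖ (fun _ => T) i))) (t i)
  · obtain ⟨c, rfl⟩ := alphaDual_surjective hE h
    let ρ : Rᵐᵒᵖ →ₗ[Rᵐᵒᵖ] (T →ₗ[S] T) := LinearMap.toSpanSingleton Rᵐᵒᵖ _ LinearMap.id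
    have hρ : Bijective ρ := by
      have : (ρ : Rᵐᵒᵖ → (T →ₗ[S] T)) = rightHomothety S R T ∘ unop := rfl
      rw [this]
      exact hW.bijR.comp opEquiv.symm.bijective
    let e := LinearEquiv.ofBijective ρ hρ
    refine ⟨AddMonoidHom.mk' (fun x => c ((LinearMap.toSpanSingleton Rᵐᵒᵖ E x).comp
      e.symm.toLinearMap)) fun x y => ?_, LinearMap.ext fun k => char_ext fun t => ?_⟩
    · rw [← map_add]
      congr 1
      refine LinearMap.ext fun φ => ?_
      exact smul_add (e.symm φ) x y
    · show c ((LinearMap.toSpanSingleton Rᵐᵒᵖ E (k t)).comp e.symm.toLinearMap) =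
        c (k.comp (evAt S Rᵐᵒᵖ T t))
      congr 1
      refine LinearMap.ext fun φ => ?_
      obtain ⟨a, rfl⟩ := e.surjective φ
      show (e.symm (e a)) • k t = k (a • t)
      rw [e.symm_apply_apply, map_smul]

theorem bassChar_of_injective (hW : IsWakamatsuTilting S R T) (hS : IsLeftCoherentRing S)
    {E : Type u} [AddCommGroup E] [Module Rᵐᵒᵖ E] (hE : Module.Injective Rᵐᵒᵖ E) :
    BassChar S R T E where
  ext := extZero_of_injective hE
  tor i := by
    have hfp : Module.FinitePresentation S T := hW.fgProjResS.finitePresentation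
    exact extZero_char_of_injective hE hS i T (extVanishAll_iff.1 hW.extS i)
  nu := nuDual_bijective_of_injective hW hE

variable (S R T) in
/-- The inclusions of the summands in a direct sum of copies of `T` span `Hom(T, T^(I))`. -/
def finsuppHom (I : Type u) : (I →₀ Sᵐᵒᵖ) →ₗ[Sᵐᵒᵖ] (T →ₗ[Rᵐᵒᵖ] (I →₀ T)) :=
  Finsupp.linearCombination Sᵐᵒᵖ fun i => (Finsupp.lsingle i : T →ₗ[Rᵐᵒᵖ] (I →₀ T))

theorem finsuppHom_single (I : Type u) (i : I) (s : Sᵐᵒᵖ) (t : T) :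
    finsuppHom S R T I (Finsupp.single i s) t = Finsupp.single i (s.unop • t) := by
  rw [finsuppHom, Finsupp.linearCombination_single]
  rfl

theorem finsuppHom_apply (I : Type u) (x : I →₀ Sᵐᵒᵖ) (t : T) (i : I) :
    finsuppHom S R T I x t i = (x i).unop • t := by
  classical
  induction x using Finsupp.induction_linear with
  | zero => simp
  | add x y hx hy =>
    rw [map_add, LinearMap.add_apply, Finsupp.add_apply, hx, hy, Finsupp.add_apply, unop_add,
      add_smul]
  | single j s =>
    rw [finsuppHom_single, Finsupp.single_apply, Finsupp.single_apply]
    split_ifs <;> simp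

theorem finsuppHom_bijective (hW : IsWakamatsuTilting S R T) (I : Type u) :
    Bijective (finsuppHom S R T I) := by
  have hfp : Module.FinitePresentation Rᵐᵒᵖ T := hW.fgProjResR.finitePresentation
  constructor
  · refine (injective_iff_map_eq_zero _).2 fun x hx => Finsupp.ext fun i => unop_injective ?_
    refine hW.bijS.1 (LinearMap.ext fun t => ?_)
    show (x i).unop • t = (0 : S) • t
    rw [← finsuppHom_apply (R := R), hx, zero_smul]
    rfl
  · intro f
    obtain ⟨s, hs⟩ := exists_support_of_finite f
    choose y hy using fun i => hW.bijS.2 ((Finsupp.lapply i).comp f)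
    have hy' : ∀ i t, y i • t = f t i := fun i t => LinearMap.congr_fun (hy i) t
    refine ⟨Finsupp.onFinset s (fun i => op (y i)) fun i hi => ?_,
      LinearMap.ext fun t => Finsupp.ext fun i => ?_⟩
    · by_contra hn
      refine hi (unop_injective (hW.bijS.1 (LinearMap.ext fun t => ?_)))
      show y i • t = (0 : S) • t
      rw [hy', zero_smul]
      exact Finsupp.notMem_support_iff.1 fun h => hn (hs t h)
    · rw [finsuppHom_apply]
      exact hy' i t

theorem projective_hom_finsupp (hW : IsWakamatsuTilting S R T) (I : Type u) :
    Module.Projective Sᵐᵒᵖ (T →ₗ[Rᵐᵒᵖ] (I →₀ T)) :=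
  .of_equiv (LinearEquiv.ofBijective _ (finsuppHom_bijective hW I))

theorem bassChar_finsupp (hW : IsWakamatsuTilting S R T) (hR : IsRightNoetherianRing R)
    (I : Type u) : BassChar S R T (I →₀ T) where
  ext i := by
    have := hR.isNoetherianRing
    have hfp : Module.FinitePresentation Rᵐᵒᵖ T := hW.fgProjResR.finitePresentation
    exact extZero_finsupp I i T (extVanishAll_iff.1 hW.extR i)
  tor := extZero_of_projective (projective_hom_finsupp hW I)
  nu := by
    refine ⟨nuDual_injective_of fun c hc => ?_, fun h => ?_⟩
    · refine char_ext fun x => ?_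
      induction x using Finsupp.induction_linear with
      | zero => rw [map_zero]; rfl
      | add x y hx hy => rw [map_add, map_add, hx, hy]
      | single i t =>
        exact DFunLike.congr_fun (LinearMap.congr_fun hc (Finsupp.lsingle i)) t
    · let c : CharacterModule (I →₀ T) :=
        Finsupp.liftAddHom fun i => (h (Finsupp.lsingle i) : T →+ AddCircle (1 : ℚ))
      refine ⟨c, ?_⟩
      refine LinearMap.ext fun f => ?_
      obtain ⟨x, rfl⟩ := (finsuppHom_bijective hW I).2 f
      induction x using Finsupp.induction_linear with
      | zero => simp
      | add x y hx hy => rw [map_add, map_add, map_add, hx, hy]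
      | single i s =>
        rw [finsuppHom, Finsupp.linearCombination_single, map_smul, map_smul]
        congr 1
        refine char_ext fun t => ?_
        exact Finsupp.liftAddHom_apply_single _ i t

end Members

/-! ## Covers by sums of copies of `T`, and transfer of `Ext`-vanishing from `T` -/

theorem IsSES.exists_lift_of_comp_eq_zero {A : Type u} [Ring A] {X Y Z W : Type u}
    [AddCommGroup X] [Module A X] [AddCommGroup Y] [Module A Y] [AddCommGroup Z] [Module A Z]
    [AddCommGroup W] [Module A W] {f : X →ₗ[A] Y} {g : Y →ₗ[A] Z} (h : IsSES f g)
    (φ : W →ₗ[A] Y) (hφ : g.comp φ = 0) : ∃ ψ : W →ₗ[A] X, f.comp ψ = φ := by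
  have hr : ∀ t, φ t ∈ LinearMap.range f := fun t => (h.exact (φ t)).1 (LinearMap.congr_fun hφ t)
  refine ⟨(LinearEquiv.ofInjective f h.inj).symm.toLinearMap.comp (φ.codRestrict _ hr),
    LinearMap.ext fun t => ?_⟩
  exact congrArg Subtype.val
    ((LinearEquiv.ofInjective f h.inj).apply_symm_apply (φ.codRestrict _ hr t))

theorem finitePresentation_hom_free {S R : Type u} [Ring S] [Ring R]
    {T : Type u} [AddCommGroup T] [Module S T] [Module Rᵐᵒᵖ T] [SMulCommClass Rᵐᵒᵖ S T]
    [Module.FinitePresentation S T] (n : ℕ) :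
    Module.FinitePresentation S ((Fin n → Rᵐᵒᵖ) →ₗ[Rᵐᵒᵖ] T) := by
  let e : (Fin n → T) ≃ₗ[S] ((Fin n → Rᵐᵒᵖ) →ₗ[Rᵐᵒᵖ] T) :=
    { toFun v := ∑ i, coordHom Rᵐᵒᵖ S T i (v i)
      invFun φ i := φ (Pi.single i 1)
      map_add' v w := by
        rw [← Finset.sum_add_distrib]
        exact Finset.sum_congr rfl fun i _ => map_add _ _ _
      map_smul' s v := by
        rw [RingHom.id_apply, Finset.smul_sum]
        exact Finset.sum_congr rfl fun i _ => map_smul _ _ _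
      left_inv v := funext fun i => by
        show (∑ j, coordHom Rᵐᵒᵖ S T j (v j)) (Pi.single i 1) = v i
        rw [LinearMap.sum_apply, Finset.sum_eq_single i]
        · show (Pi.single i (1 : Rᵐᵒᵖ) : Fin n → Rᵐᵒᵖ) i • v i = v i
          rw [Pi.single_eq_same, one_smul]
        · intro j _ hj
          show (Pi.single i (1 : Rᵐᵒᵖ) : Fin n → Rᵐᵒᵖ) j • v j = 0
          rw [Pi.single_eq_of_ne hj, zero_smul]
        · exact fun h => (h (Finset.mem_univ i)).elim
      right_inv φ := sum_coordHom φ }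
  exact Module.FinitePresentation.of_equiv e

section Transfer

variable {S R : Type u} [Ring S] [Ring R]
variable {T : Type u} [AddCommGroup T] [Module S T] [Module Rᵐᵒᵖ T] [SMulCommClass S Rᵐᵒᵖ T]
variable {M : Type u} [AddCommGroup M] [Module Rᵐᵒᵖ M]

theorem BassChar.exists_cover (hW : IsWakamatsuTilting S R T) (hR : IsRightNoetherianRing R)
    (hM : BassChar S R T M) :
    ∃ (I : Type u) (K : ModuleCat.{u} Rᵐᵒᵖ) (f : K →ₗ[Rᵐᵒᵖ] (I →₀ T)) (g : (I →₀ T) →ₗ[Rᵐᵒᵖ] M),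
      IsSES f g ∧ BassChar S R T K ∧ ∀ φ : T →ₗ[Rᵐᵒᵖ] M, ∃ ψ : T →ₗ[Rᵐᵒᵖ] (I →₀ T),
        g.comp ψ = φ := by
  let g : ((T →ₗ[Rᵐᵒᵖ] M) →₀ T) →ₗ[Rᵐᵒᵖ] M := Finsupp.lsum ℕ fun φ => φ
  have hg : ∀ φ t, g (Finsupp.single φ t) = φ t := fun φ t => Finsupp.lsum_single _ _ _ _
  have hsurj : Surjective g := fun y => mem_of_char g.toAddMonoidHom y fun c hc => by
    have : c = 0 := hM.nu.1 (LinearMap.ext fun φ => char_ext fun t => by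
      show c (φ t) = (0 : CharacterModule M) (φ t)
      rw [← hg]
      exact hc _)
    rw [this]; rfl
  have hl : ∀ φ : T →ₗ[Rᵐᵒᵖ] M, ∃ ψ : T →ₗ[Rᵐᵒᵖ] ((T →ₗ[Rᵐᵒᵖ] M) →₀ T), g.comp ψ = φ :=
    fun φ => ⟨Finsupp.lsingle φ, LinearMap.ext fun t => hg φ t⟩
  have hs := IsSES.of_surjective hsurj
  exact ⟨_, .of Rᵐᵒᵖ (LinearMap.ker g), _, g, hs,
    BassChar.first hs hl (bassChar_finsupp hW hR _) hM, hl⟩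

variable [SMulCommClass Rᵐᵒᵖ S T]
variable {X : Type u} [AddCommGroup X] [Module Rᵐᵒᵖ X]

variable (S T) in
/-- The dual of the composition map `Hom_R(T, M) ⊗_S Hom_R(X, T) → Hom_R(X, M)`. -/
def compDual (c : CharacterModule (X →ₗ[Rᵐᵒᵖ] M)) :
    (T →ₗ[Rᵐᵒᵖ] M) →ₗ[Sᵐᵒᵖ] CharacterModule (X →ₗ[Rᵐᵒᵖ] T) where
  toFun f := AddMonoidHom.mk' (fun φ => c (f.comp φ)) fun φ φ' => by
    rw [← map_add, LinearMap.comp_add]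
  map_add' f f' := char_ext fun φ => map_add c (f.comp φ) (f'.comp φ)
  map_smul' _ _ := rfl

/-- The inclusion of the `i`-th coordinate in `Hom(A^n, M) ≅ M^n`. -/
def coordAdd (M : Type u) [AddCommGroup M] [Module Rᵐᵒᵖ M] {n : ℕ} (i : Fin n) :
    M →+ ((Fin n → Rᵐᵒᵖ) →ₗ[Rᵐᵒᵖ] M) :=
  AddMonoidHom.mk' (fun m => (LinearMap.toSpanSingleton Rᵐᵒᵖ M m).comp (LinearMap.proj i))
    fun m m' => LinearMap.ext fun v => smul_add (v i) m m'

theorem sum_coordAdd {n : ℕ} (φ : (Fin n → Rᵐᵒᵖ) →ₗ[Rᵐᵒᵖ] M) :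
    ∑ i, coordAdd M i (φ (Pi.single i 1)) = φ := by
  refine LinearMap.ext fun v => ?_
  rw [LinearMap.sum_apply]
  conv_rhs => rw [← Finset.univ_sum_single v, map_sum]
  refine Finset.sum_congr rfl fun i _ => ?_
  show v i • φ (Pi.single i 1) = _
  rw [← map_smul, ← Pi.single_smul, smul_eq_mul, mul_one]

theorem compDual_free_injective (hM : Injective (nuDual S R T M)) {n : ℕ}
    {c : CharacterModule ((Fin n → Rᵐᵒᵖ) →ₗ[Rᵐᵒᵖ] M)} (hc : compDual S T c = 0) : c = 0 := by
  refine char_ext fun ψ => ?_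
  rw [← sum_coordAdd ψ, map_sum]
  refine Finset.sum_eq_zero fun i _ => ?_
  have : (AddMonoidHom.comp c (coordAdd M i) : CharacterModule M) = 0 :=
    nuDual_eq_zero hM <| LinearMap.ext fun f => char_ext fun t => by
      refine Eq.trans ?_ (DFunLike.congr_fun (LinearMap.congr_fun hc f) (coordAdd T i t))
      show c _ = c _
      congr 1
      exact LinearMap.ext fun v => (map_smul f (v i) t).symm
  exact DFunLike.congr_fun this (ψ (Pi.single i 1))

theorem compDual_free_surjective (hM : Surjective (nuDual S R T M)) {n : ℕ}
    (h : (T →ₗ[Rᵐᵒᵖ] M) →ₗ[Sᵐᵒᵖ] CharacterModule ((Fin n → Rᵐᵒᵖ) →ₗ[Rᵐᵒᵖ] T)) :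
    ∃ c : CharacterModule ((Fin n → Rᵐᵒᵖ) →ₗ[Rᵐᵒᵖ] M), compDual S T c = h := by
  choose c hc using fun i => hM ((charDual (coordHom Rᵐᵒᵖ S T i)).comp h)
  refine ⟨AddMonoidHom.mk' (fun ψ => ∑ i, c i (ψ (Pi.single i 1))) fun ψ ψ' => ?_,
    LinearMap.ext fun f => char_ext fun φ => ?_⟩
  · rw [← Finset.sum_add_distrib]
    exact Finset.sum_congr rfl fun i _ => map_add (c i) _ _
  · show ∑ i, c i (f (φ (Pi.single i 1))) = h f φ
    conv_rhs => rw [← sum_coordHom (A := S) φ, map_sum]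
    exact Finset.sum_congr rfl fun i _ =>
      DFunLike.congr_fun (LinearMap.congr_fun (hc i) f) (φ (Pi.single i 1))

theorem compDual_eq_zero [Module.FinitePresentation S T] (hM : Bijective (nuDual S R T M))
    (hext : ∀ (Y : Type u) [AddCommGroup Y] [Module S Y] [Module.FinitePresentation S Y],
      ExtZero Sᵐᵒᵖ (T →ₗ[Rᵐᵒᵖ] M) (CharacterModule Y) 1)
    [Module.FinitePresentation Rᵐᵒᵖ X] {c : CharacterModule (X →ₗ[Rᵐᵒᵖ] M)}
    (hc : compDual S T c = 0) : c = 0 := by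
  obtain ⟨n, q, hq⟩ := Module.Finite.exists_fin' Rᵐᵒᵖ X
  have : Module.Finite Rᵐᵒᵖ (LinearMap.ker q) := .of_fg (Module.FinitePresentation.fg_ker q hq)
  obtain ⟨m, p, hp⟩ := Module.Finite.exists_fin' Rᵐᵒᵖ (LinearMap.ker q)
  let p' : (Fin m → Rᵐᵒᵖ) →ₗ[Rᵐᵒᵖ] (Fin n → Rᵐᵒᵖ) := (LinearMap.ker q).subtype.comp p
  have hqp : q.comp p' = 0 := LinearMap.ext fun x => (p x).2
  have hpull : Injective fun ψ : X →ₗ[Rᵐᵒᵖ] M => ψ.comp q := fun ψ ψ' h =>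
    LinearMap.ext fun x => by
      obtain ⟨y, rfl⟩ := hq x
      exact LinearMap.congr_fun h y
  obtain ⟨c1, hc1⟩ := exists_char_extension
    (AddMonoidHom.mk' (fun ψ : X →ₗ[Rᵐᵒᵖ] M => ψ.comp q) fun _ _ => rfl) hpull c
  let r := homPre S T p'
  have hI := IsSES.of_surjective r.surjective_rangeRestrict
  have hY0 := IsSES.of_injective (LinearMap.range r).subtype_injective
  have hY := isSES_charDual hY0
  have hfp := finitePresentation_hom_free (S := S) (R := R) (T := T) m
  have hfp' := finitePresentation_hom_free (S := S) (R := R) (T := T) n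
  have hYfp := Module.finitePresentation_of_surjective _ hY0.surj (by
    rw [Submodule.ker_mkQ, Submodule.range_subtype]
    exact Module.Finite.iff_fg.1 inferInstance)
  obtain ⟨h1, hh1⟩ := (isSES_charDual hI).exists_lift_of_comp_eq_zero (compDual S T c1) (by
    refine LinearMap.ext fun f => char_ext fun φ => ?_
    obtain ⟨φ', hφ'⟩ := exists_factor_of_exact (IsSES.of_surjective hq) φ.1 (by
      have h0 : φ.1.comp p' = 0 := congrArg Subtype.val (LinearMap.mem_ker.1 φ.2)
      refine LinearMap.ext fun x => ?_
      obtain ⟨y, rfl⟩ := hp x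
      exact LinearMap.congr_fun h0 y)
    show c1 (f.comp φ.1) = 0
    rw [← hφ', ← LinearMap.comp_assoc]
    exact (hc1 (f.comp φ')).trans (DFunLike.congr_fun (LinearMap.congr_fun hc f) φ'))
  obtain ⟨h2, hh2⟩ := hY.exists_lift (hext _) h1
  obtain ⟨c2, rfl⟩ := compDual_free_surjective hM.2 h2
  let c3 : CharacterModule ((Fin n → Rᵐᵒᵖ) →ₗ[Rᵐᵒᵖ] M) := AddMonoidHom.comp c2
    (AddMonoidHom.mk' (fun ψ : (Fin n → Rᵐᵒᵖ) →ₗ[Rᵐᵒᵖ] M => ψ.comp p') fun _ _ => rfl)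
  have h3 : c1 - c3 = 0 := by
    refine compDual_free_injective hM.1 (LinearMap.ext fun f => char_ext fun φ => ?_)
    show c1 (f.comp φ) - c2 (f.comp (φ.comp p')) = 0
    have h4 : c1 (f.comp φ) = h1 f (r.rangeRestrict φ) :=
      (DFunLike.congr_fun (LinearMap.congr_fun hh1 f) φ).symm
    rw [h4, ← hh2]
    exact sub_self (c2 (f.comp (φ.comp p')))
  refine char_ext fun ψ => ?_
  have h4 := hc1 ψ
  rw [sub_eq_zero.1 h3] at h4
  rw [← h4]
  show c2 ((ψ.comp q).comp p') = 0
  rw [LinearMap.comp_assoc, hqp, LinearMap.comp_zero, map_zero]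

theorem extZero_of_extZero_bimodule [Module.FinitePresentation S T]
    (hR : IsRightNoetherianRing R) (hM : Bijective (nuDual S R T M))
    (hext : ∀ (Y : Type u) [AddCommGroup Y] [Module S Y] [Module.FinitePresentation S Y],
      ExtZero Sᵐᵒᵖ (T →ₗ[Rᵐᵒᵖ] M) (CharacterModule Y) 1)
    (i : ℕ) (X : Type u) [AddCommGroup X] [Module Rᵐᵒᵖ X] [Module.Finite Rᵐᵒᵖ X]
    (h : ExtZero Rᵐᵒᵖ X T (i + 1)) : ExtZero Rᵐᵒᵖ X M (i + 1) := by
  have := hR.isNoetherianRing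
  induction i generalizing X with
  | zero =>
    obtain ⟨n, q, hq, hfin⟩ := IsNoetherianRing.exists_syzygy (A := Rᵐᵒᵖ) X
    have hs := IsSES.of_surjective hq
    have hfp := Module.finitePresentation_of_finite Rᵐᵒᵖ (LinearMap.ker q)
    refine hs.extZero_one_of_extension (extZero_of_projective inferInstance 0) fun φ => ?_
    refine mem_of_char (AddMonoidHom.mk' (fun ψ : (Fin n → Rᵐᵒᵖ) →ₗ[Rᵐᵒᵖ] M =>
      ψ.comp (LinearMap.ker q).subtype) fun _ _ => rfl) φ fun c hc => ?_
    have : c = 0 := compDual_eq_zero hM hext <| LinearMap.ext fun f => char_ext fun φ => by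
      obtain ⟨φ', rfl⟩ := hs.exists_extension h φ
      exact hc (f.comp φ')
    rw [this]
    rfl
  | succ i ih =>
    obtain ⟨n, q, hq, hfin⟩ := IsNoetherianRing.exists_syzygy (A := Rᵐᵒᵖ) X
    have hs := IsSES.of_surjective hq
    exact hs.ext_third_left (ih _ (hs.ext_first_left (extZero_of_projective inferInstance i) h))
      (extZero_of_projective inferInstance _)

/-- If `T` has finite injective dimension, then so has every module `M` as in
`extZero_of_extZero_bimodule`. -/
theorem extZero_of_injDim [Module.FinitePresentation S T]
    (hR : IsRightNoetherianRing R) (hM : Bijective (nuDual S R T M))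
    (hext : ∀ (Y : Type u) [AddCommGroup Y] [Module S Y] [Module.FinitePresentation S Y],
      ExtZero Sᵐᵒᵖ (T →ₗ[Rᵐᵒᵖ] M) (CharacterModule Y) 1)
    {r : ℕ} (hr : InjDimLE Rᵐᵒᵖ T r) (X : Type u) [AddCommGroup X] [Module Rᵐᵒᵖ X] (j : ℕ) :
    ExtZero Rᵐᵒᵖ X M (r + j + 1) :=
  extZero_of_forall_finite r (fun X _ _ _ =>
    extZero_of_extZero_bimodule hR hM hext r X (injDimLE_extZero hr X 0)) X j

end Transfer

/-! ## `Ext` from injective modules to the Bass class vanishes in high degrees -/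

section FinsuppLeft

variable {A : Type u} [Ring A] {W : Type u} [AddCommGroup W] [Module A W]

theorem IsSES.finsupp {X Y Z : Type u} [AddCommGroup X] [Module A X] [AddCommGroup Y] [Module A Y]
    [AddCommGroup Z] [Module A Z] {f : X →ₗ[A] Y} {g : Y →ₗ[A] Z} (h : IsSES f g) (I : Type u) :
    IsSES (Finsupp.mapRange.linearMap (α := I) f) (Finsupp.mapRange.linearMap (α := I) g) where
  inj := Finsupp.mapRange_injective _ (map_zero f) h.inj
  surj := Finsupp.mapRange_surjective _ (map_zero g) h.surj
  exact y := by
    constructor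
    · intro hy
      have hy' : ∀ i, ∃ x, f x = y i := fun i => (h.exact (y i)).1 (DFunLike.congr_fun hy i)
      choose x hx using hy'
      refine ⟨Finsupp.onFinset y.support x fun i hi => ?_, Finsupp.ext fun i => hx i⟩
      refine Finsupp.mem_support_iff.2 fun h0 => hi (h.inj ?_)
      rw [hx, h0, map_zero]
    · rintro ⟨x, rfl⟩
      exact Finsupp.ext fun i => h.exact.apply_apply_eq_zero (x i)

theorem extZero_finsupp_left (I : Type u) (i : ℕ) (X : Type u) [AddCommGroup X] [Module A X]
    (h : ExtZero A X W (i + 1)) : ExtZero A (I →₀ X) W (i + 1) := by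
  have hq := Finsupp.linearCombination_id_surjective A X
  have hs := IsSES.of_surjective hq
  have hs' := hs.finsupp I
  induction i generalizing X with
  | zero =>
    refine hs'.extZero_one_of_extension (extZero_of_projective inferInstance 0) fun φ => ?_
    choose ψ hψ using fun i => hs.exists_extension h (φ.comp (Finsupp.lsingle i))
    refine ⟨Finsupp.lsum ℕ ψ, Finsupp.lhom_ext fun i x => ?_⟩
    refine Eq.trans ?_ (LinearMap.congr_fun (hψ i) x)
    simp
  | succ i ih =>
    exact hs'.ext_third_left
      (ih _ (hs.ext_first_left (extZero_of_projective inferInstance i) h)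
        (Finsupp.linearCombination_id_surjective A _)
        (IsSES.of_surjective (Finsupp.linearCombination_id_surjective A _))
        ((IsSES.of_surjective (Finsupp.linearCombination_id_surjective A _)).finsupp I))
      (extZero_of_projective inferInstance _)

end FinsuppLeft

section HighDegrees

variable {S R : Type u} [Ring S] [Ring R]
variable {T : Type u} [AddCommGroup T] [Module S T] [Module Rᵐᵒᵖ T] [SMulCommClass S Rᵐᵒᵖ T]

theorem BassChar.extZero_finsupp_left {M : Type u} [AddCommGroup M] [Module Rᵐᵒᵖ M]
    (hM : BassChar S R T M) (I : Type u) (i : ℕ) : ExtZero Rᵐᵒᵖ (I →₀ T) M (i + 1) :=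
  _root_.extZero_finsupp_left I i T (hM.ext i)

theorem BassChar.exists_syzygy (hW : IsWakamatsuTilting S R T) (hR : IsRightNoetherianRing R)
    (d n : ℕ) {M : ModuleCat.{u} Rᵐᵒᵖ} (hM : BassChar S R T M) (hd : ∀ j, d ≤ j →
      ∀ (Y : Type u) [AddCommGroup Y] [Module S Y] [Module.FinitePresentation S Y],
        ExtZero Sᵐᵒᵖ (T →ₗ[Rᵐᵒᵖ] M) (CharacterModule Y) (j + 1)) :
    ∃ K : ModuleCat.{u} Rᵐᵒᵖ, BassChar S R T K ∧ (∀ j, d ≤ j + n →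
      ∀ (Y : Type u) [AddCommGroup Y] [Module S Y] [Module.FinitePresentation S Y],
        ExtZero Sᵐᵒᵖ (T →ₗ[Rᵐᵒᵖ] K) (CharacterModule Y) (j + 1)) ∧
      ∀ W : ModuleCat.{u} Rᵐᵒᵖ, BassChar S R T W → ∀ i,
        (ExtZero Rᵐᵒᵖ M W (n + i + 1) ↔ ExtZero Rᵐᵒᵖ K W (i + 1)) := by
  induction n with
  | zero => exact ⟨M, hM, hd, fun W _ i => by rw [zero_add]⟩
  | succ n ih =>
    obtain ⟨K, hK, hKd, hKW⟩ := ih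
    obtain ⟨I, K', f, g, hs, hK', hl⟩ := hK.exists_cover hW hR
    refine ⟨K', hK', fun j hj Y _ _ _ => ?_, fun W hW' i => ?_⟩
    · exact (isSES_homMap S T hs hl).ext_first_left
        (extZero_of_projective (projective_hom_finsupp hW I) _) (hKd (j + 1) (by omega) Y)
    · rw [show n + 1 + i + 1 = n + (i + 1) + 1 by omega, hKW W hW' (i + 1)]
      exact ⟨hs.ext_first_left (hW'.extZero_finsupp_left I i),
        fun h => hs.ext_third_left h (hW'.extZero_finsupp_left I (i + 1))⟩

/-- Both conclusions share the bound: `T^(I)` has bounded injective dimension, and `Ext` from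
injective modules to modules in the Bass class vanishes in high degrees. -/
theorem exists_uniform_bound (hW : IsWakamatsuTilting S R T) (hR : IsRightNoetherianRing R)
    (hS : IsLeftCoherentRing S) (hidR : ∃ n, InjDimLE Rᵐᵒᵖ T n) (hidS : ∃ n, InjDimLE S T n) :
    ∃ n : ℕ, (∀ (I : Type u) (X : Type u) [AddCommGroup X] [Module Rᵐᵒᵖ X] (j : ℕ),
        ExtZero Rᵐᵒᵖ X (I →₀ T) (n + j + 1)) ∧
      ∀ (E : ModuleCat.{u} Rᵐᵒᵖ), Module.Injective Rᵐᵒᵖ E → ∀ M : ModuleCat.{u} Rᵐᵒᵖ,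
        BassChar S R T M → ∀ j, ExtZero Rᵐᵒᵖ E M (n + j + 1) := by
  obtain ⟨r, hr⟩ := hidR
  obtain ⟨d, hd⟩ := hidS
  have := SMulCommClass.symm S Rᵐᵒᵖ T
  have hfp : Module.FinitePresentation S T := hW.fgProjResS.finitePresentation
  refine ⟨max d r, fun I X _ _ j => ?_, fun E hE M hM j => ?_⟩
  · obtain ⟨k, hk⟩ := Nat.exists_eq_add_of_le (le_max_right d r)
    rw [hk, Nat.add_assoc r]
    exact extZero_of_injDim hR (bassChar_finsupp hW hR I).nu
      (fun Y _ _ _ => extZero_of_projective (projective_hom_finsupp hW I) 0) hr X _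
  · obtain ⟨K, hK, hKd, hKW⟩ := (bassChar_of_injective hW hS hE).exists_syzygy hW hR d (max d r)
      fun j hj Y _ _ _ => by
        obtain ⟨k, rfl⟩ := Nat.exists_eq_add_of_le hj
        exact extZero_char_of_injective hE hS _ Y (injDimLE_extZero hd Y k)
    obtain ⟨I, K', f, g, hs, hK', hl⟩ := hK.exists_cover hW hR
    have h0 : ExtZero Rᵐᵒᵖ E K' (max d r + 0 + 1) := by
      obtain ⟨k, hk⟩ := Nat.exists_eq_add_of_le (le_max_right d r)
      rw [hk, Nat.add_assoc r]
      refine extZero_of_injDim hR hK'.nu (fun Y _ _ _ => ?_) hr E _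
      exact (isSES_homMap S T hs hl).ext_first_left
        (extZero_of_projective (projective_hom_finsupp hW I) _)
        (hKd 1 (by have := le_max_left d r; omega) Y)
    obtain ⟨s, hsec⟩ := hs.exists_lift ((hKW K' hK' 0).1 h0) LinearMap.id
    exact (hKW M hM j).2 ((hM.extZero_finsupp_left I j).retract_left hsec)

end HighDegrees

/-! ## Construction of Gorenstein injective modules -/

section IntSequence

theorem exists_int_sequence {α : Type*} (r : α → α → Prop) (p : α → Prop)
    (hr : ∀ x, p x → ∃ y, p y ∧ r x y) (hl : ∀ x, p x → ∃ y, p y ∧ r y x) (x : α) (hx : p x) :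
    ∃ z : ℤ → α, z 0 = x ∧ (∀ i, p (z i)) ∧ ∀ i, r (z i) (z (i + 1)) := by
  choose! F hF hF' using hr
  choose! G hG hG' using hl
  have hFp : ∀ n, p (F^[n] x) := fun n => by
    induction n with
    | zero => exact hx
    | succ n ih => rw [iterate_succ_apply']; exact hF _ ih
  have hGp : ∀ n, p (G^[n] x) := fun n => by
    induction n with
    | zero => exact hx
    | succ n ih => rw [iterate_succ_apply']; exact hG _ ih
  let z : ℤ → α := fun i => match i with
    | .ofNat n => F^[n] x
    | .negSucc n => G^[n + 1] x
  refine ⟨z, rfl, fun i => ?_, fun i => ?_⟩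
  · cases i with
    | ofNat n => exact hFp n
    | negSucc n => exact hGp (n + 1)
  · cases i with
    | ofNat n =>
      show r (F^[n] x) (F^[n + 1] x)
      rw [iterate_succ_apply']
      exact hF' _ (hFp n)
    | negSucc n =>
      cases n with
      | zero => exact hG' _ hx
      | succ n =>
        show r (G^[n + 1 + 1] x) (G^[n + 1] x)
        rw [iterate_succ_apply' G (n + 1)]
        exact hG' _ (hGp (n + 1))

end IntSequence

section Gorenstein

variable {A : Type u} [Ring A]

/-- `Z'` is the kernel of an epimorphism from an injective module onto `Z`. -/
def InjLink (Z' Z : ModuleCat.{u} A) : Prop :=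
  ∃ (J : ModuleCat.{u} A) (f : Z' →ₗ[A] J) (g : J →ₗ[A] Z), Module.Injective A J ∧ IsSES f g

theorem isGorensteinInjective_of_links (G : ModuleCat.{u} A → Prop)
    (hr : ∀ Z, G Z → ∃ Z', G Z' ∧ InjLink Z Z') (hl : ∀ Z, G Z → ∃ Z', G Z' ∧ InjLink Z' Z)
    (he : ∀ Z, G Z → ∀ (I : Type u) [AddCommGroup I] [Module A I], Module.Injective A I →
      ExtZero A I Z 1) (K : ModuleCat.{u} A) (hK : G K) : IsGorensteinInjective A K := by
  obtain ⟨Z, rfl, hG, hZ⟩ := exists_int_sequence InjLink G hr hl K hK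
  choose J f g hJ hs using hZ
  let C : ZComplex A := { P := fun i => J i, d := fun i => (f (i + 1)).comp (g i) }
  have hker : ∀ i x, C.d i x = 0 ↔ g i x = 0 := fun i x =>
    ⟨fun h => (hs (i + 1)).inj (h.trans (map_zero _).symm), fun h => by
      show f (i + 1) (g i x) = 0
      rw [h, map_zero]⟩
  refine ⟨C, hJ, fun i x => ?_, fun I _ _ hI i φ => ?_, ⟨?_⟩⟩
  · rw [hker (i + 1) x, (hs (i + 1)).exact x]
    constructor
    · rintro ⟨y, rfl⟩
      obtain ⟨w, rfl⟩ := (hs i).surj y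
      exact ⟨w, rfl⟩
    · rintro ⟨w, rfl⟩
      exact ⟨g i w, rfl⟩
  · constructor
    · intro h
      obtain ⟨ψ, rfl⟩ := (hs (i + 1)).exists_lift_of_comp_eq_zero φ
        (LinearMap.ext fun x => (hker (i + 1) _).1 (LinearMap.congr_fun h x))
      obtain ⟨ψ', rfl⟩ := (hs i).exists_lift (he _ (hG i) I hI) ψ
      exact ⟨ψ', rfl⟩
    · rintro ⟨ψ, rfl⟩
      refine LinearMap.ext fun x => (hker (i + 1) _).2 ?_
      exact (hs (i + 1)).exact.apply_apply_eq_zero _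
  · have hrange : LinearMap.range (f 0) = LinearMap.ker (C.d 0) := by
      ext x
      rw [LinearMap.mem_ker, hker 0 x, (hs 0).exact x]
      rfl
    exact (LinearEquiv.ofInjective (f 0) (hs 0).inj).trans (LinearEquiv.ofEq _ _ hrange)

theorem Module.Injective.prod {E E' : Type u} [AddCommGroup E] [Module A E] [AddCommGroup E']
    [Module A E'] (hE : Module.Injective A E) (hE' : Module.Injective A E') :
    Module.Injective A (E × E') where
  out X Y _ _ _ _ f hf φ := by
    obtain ⟨a, ha⟩ := hE.out f hf ((LinearMap.fst A E E').comp φ)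
    obtain ⟨b, hb⟩ := hE'.out f hf ((LinearMap.snd A E E').comp φ)
    exact ⟨a.prod b, fun x => Prod.ext (ha x) (hb x)⟩

theorem isGorensteinInjective_of_injective (E : ModuleCat.{u} A) (hE : Module.Injective A E) :
    IsGorensteinInjective A E := by
  have hlink : ∀ Z : ModuleCat.{u} A, Module.Injective A Z → InjLink Z Z := fun Z hZ =>
    ⟨.of A (Z × Z), LinearMap.inl A Z Z, LinearMap.snd A Z Z, hZ.prod hZ,
      LinearMap.inl_injective, LinearMap.snd_surjective, .inl_snd⟩
  exact isGorensteinInjective_of_links (fun Z => Module.Injective A Z)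
    (fun Z hZ => ⟨Z, hZ, hlink Z hZ⟩) (fun Z hZ => ⟨Z, hZ, hlink Z hZ⟩)
    (fun Z hZ I _ _ _ => extZero_of_injective hZ 0) E hE

/-- `K` is an `n`-th cosyzygy of `Z`. -/
def Cosyzygy : ℕ → ModuleCat.{u} A → ModuleCat.{u} A → Prop
  | 0, Z, K => Z = K
  | n + 1, Z, K => ∃ Z1 : ModuleCat.{u} A, InjLink Z Z1 ∧ Cosyzygy n Z1 K

theorem exists_injLink (Z : ModuleCat.{u} A) : ∃ Z' : ModuleCat.{u} A, InjLink Z Z' := by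
  obtain ⟨E, f, hf, hE⟩ := exists_injective_embedding (A := A) Z
  exact ⟨.of A (E ⧸ LinearMap.range f), E, f, _, hE, IsSES.of_injective hf⟩

theorem hasClassCoresolution_of_cosyzygy {G : ModuleCat.{u} A → Prop}
    (hG : ∀ E : ModuleCat.{u} A, Module.Injective A E → G E) (n : ℕ) (M : ModuleCat.{u} A)
    (hM : ∀ K, Cosyzygy n M K → G K) : HasClassCoresolution A G n M := by
  induction n generalizing M with
  | zero => exact hM M rfl
  | succ n ih =>
    obtain ⟨E, f, hf, hE⟩ := exists_injective_embedding (A := A) M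
    exact ⟨⟨E, f, hf⟩, hG E hE, ih _ fun K hK =>
      hM K ⟨_, ⟨E, f, _, hE, IsSES.of_injective hf⟩, hK⟩⟩

theorem Cosyzygy.extZero {n : ℕ} {Z K : ModuleCat.{u} A} (h : Cosyzygy n Z K) {W : Type u}
    [AddCommGroup W] [Module A W] {i : ℕ} (hZ : ExtZero A W Z (n + i + 1)) :
    ExtZero A W K (i + 1) := by
  induction n generalizing Z with
  | zero =>
    obtain rfl : Z = K := h
    rwa [zero_add] at hZ
  | succ n ih =>
    obtain ⟨Z1, ⟨J, f, g, hJ, hs⟩, h1⟩ := h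
    refine ih h1 (hs.ext_third_right ?_ (extZero_of_injective hJ _))
    rwa [show n + i + 1 + 1 = n + 1 + i + 1 by omega]

theorem Cosyzygy.shift {n : ℕ} {Z K K' : ModuleCat.{u} A} (h : Cosyzygy n Z K)
    (hK : InjLink K K') : ∃ Z', InjLink Z Z' ∧ Cosyzygy n Z' K' := by
  induction n generalizing Z with
  | zero =>
    obtain rfl : Z = K := h
    exact ⟨K', hK, rfl⟩
  | succ n ih =>
    obtain ⟨Z1, hZ, h1⟩ := h
    obtain ⟨Z2, hZ2, h2⟩ := ih h1
    exact ⟨Z1, hZ, Z2, hZ2, h2⟩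

theorem exists_link_horseshoe {Z' C Z Z1 : ModuleCat.{u} A} {f : Z' →ₗ[A] C} {g : C →ₗ[A] Z}
    (hs : IsSES f g) (h : InjLink Z Z1) :
    ∃ (Z1' C1 : ModuleCat.{u} A) (f1 : Z1' →ₗ[A] C1) (g1 : C1 →ₗ[A] Z1),
      InjLink Z' Z1' ∧ InjLink C C1 ∧ IsSES f1 g1 := by
  obtain ⟨E, i, p, hE, hip⟩ := h
  obtain ⟨E', a, ha, hE'⟩ := exists_injective_embedding (A := A) Z'
  obtain ⟨a', ha'⟩ := exists_extension_of_injective hE' f hs.inj a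
  have haf : ∀ z, a' (f z) = a z := fun z => LinearMap.congr_fun ha' z
  have hgf : ∀ z, g (f z) = 0 := hs.exact.apply_apply_eq_zero
  let b : C →ₗ[A] E' × E := a'.prod (i.comp g)
  have hb : Injective b := by
    refine (injective_iff_map_eq_zero b).2 fun c hc => ?_
    have h1 : a' c = 0 := congrArg Prod.fst hc
    have h2 : i (g c) = 0 := congrArg Prod.snd hc
    obtain ⟨z, rfl⟩ := (hs.exact c).1 (hip.inj (h2.trans (map_zero i).symm))
    rw [haf] at h1
    rw [ha (h1.trans (map_zero a).symm), map_zero]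
  refine ⟨.of A (E' ⧸ LinearMap.range a), .of A ((E' × E) ⧸ LinearMap.range b),
    Submodule.mapQ _ _ (LinearMap.inl A E' E) ?_,
    Submodule.liftQ _ (p.comp (LinearMap.snd A E' E)) ?_,
    ⟨E', a, _, hE', IsSES.of_injective ha⟩,
    ⟨.of A (E' × E), b, _, hE'.prod hE, IsSES.of_injective hb⟩, ?_, ?_, ?_⟩
  · rintro _ ⟨z, rfl⟩
    exact ⟨f z, Prod.ext (haf z) (by show i (g (f z)) = 0; rw [hgf, map_zero])⟩
  · rintro _ ⟨c, rfl⟩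
    exact hip.exact.apply_apply_eq_zero (g c)
  · refine (injective_iff_map_eq_zero _).2 fun x hx => ?_
    obtain ⟨e, rfl⟩ := Submodule.mkQ_surjective _ x
    obtain ⟨c, hc⟩ := (Submodule.Quotient.mk_eq_zero _).1 hx
    have h1 : a' c = e := congrArg Prod.fst hc
    have h2 : i (g c) = 0 := congrArg Prod.snd hc
    obtain ⟨z, rfl⟩ := (hs.exact c).1 (hip.inj (h2.trans (map_zero i).symm))
    exact (Submodule.Quotient.mk_eq_zero _).2 ⟨z, (haf z).symm.trans h1⟩
  · intro z
    obtain ⟨e, rfl⟩ := hip.surj z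
    exact ⟨Submodule.Quotient.mk (0, e), rfl⟩
  · intro x
    constructor
    · obtain ⟨⟨e', e⟩, rfl⟩ := Submodule.mkQ_surjective _ x
      intro hx
      obtain ⟨z, hz⟩ := (hip.exact e).1 hx
      obtain ⟨c, rfl⟩ := hs.surj z
      refine ⟨Submodule.Quotient.mk (e' - a' c), ?_⟩
      refine (Submodule.Quotient.eq _).2 ⟨-c, ?_⟩
      rw [map_neg]
      refine Prod.ext ?_ ?_
      · show -(a' c) = e' - a' c - e'
        abel
      · show -(i (g c)) = 0 - e
        rw [hz, zero_sub]
    · rintro ⟨y, rfl⟩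
      obtain ⟨e', rfl⟩ := Submodule.mkQ_surjective _ y
      exact map_zero p

theorem Cosyzygy.horseshoe {n : ℕ} {Z' C Z K : ModuleCat.{u} A} {f : Z' →ₗ[A] C} {g : C →ₗ[A] Z}
    (hs : IsSES f g) (h : Cosyzygy n Z K) :
    ∃ (K' J : ModuleCat.{u} A) (f' : K' →ₗ[A] J) (g' : J →ₗ[A] K),
      Cosyzygy n Z' K' ∧ Cosyzygy n C J ∧ IsSES f' g' := by
  induction n generalizing Z' C Z with
  | zero =>
    obtain rfl : Z = K := h
    exact ⟨Z', C, f, g, rfl, rfl, hs⟩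
  | succ n ih =>
    obtain ⟨Z1, hZ, h1⟩ := h
    obtain ⟨Z1', C1, f1, g1, hZ', hC, hs1⟩ := exists_link_horseshoe hs hZ
    obtain ⟨K', J, f', g', hK', hJ, hs'⟩ := ih hs1 h1
    exact ⟨K', J, f', g', ⟨Z1', hZ', hK'⟩, ⟨C1, hC, hJ⟩, hs'⟩

end Gorenstein

section BassToGorenstein

variable {S R : Type u} [Ring S] [Ring R]
variable {T : Type u} [AddCommGroup T] [Module S T] [Module Rᵐᵒᵖ T] [SMulCommClass S Rᵐᵒᵖ T]

theorem BassChar.exists_gidLE (hW : IsWakamatsuTilting S R T) (hR : IsRightNoetherianRing R)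
    (hS : IsLeftCoherentRing S) (hidR : ∃ n, InjDimLE Rᵐᵒᵖ T n) (hidS : ∃ n, InjDimLE S T n)
    {M : Type u} [AddCommGroup M] [Module Rᵐᵒᵖ M] (hM : BassChar S R T M) :
    ∃ n, GidLE Rᵐᵒᵖ M n := by
  obtain ⟨n, hC, hE⟩ := exists_uniform_bound hW hR hS hidR hidS
  refine ⟨n, hasClassCoresolution_of_cosyzygy isGorensteinInjective_of_injective n _
    fun K hK => ?_⟩
  refine isGorensteinInjective_of_links
    (fun K => ∃ Z : ModuleCat.{u} Rᵐᵒᵖ, BassChar S R T Z ∧ Cosyzygy n Z K) ?_ ?_ ?_ K ⟨_, hM, hK⟩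
  · rintro K ⟨Z, hZ, hK⟩
    obtain ⟨K', hK'⟩ := exists_injLink K
    obtain ⟨Z', ⟨J, f, g, hJ, hs⟩, hZ'⟩ := hK.shift hK'
    exact ⟨K', ⟨Z', BassChar.third hs hZ (bassChar_of_injective hW hS hJ), hZ'⟩, hK'⟩
  · rintro K ⟨Z, hZ, hK⟩
    obtain ⟨I, Z', f, g, hs, hZ', -⟩ := hZ.exists_cover hW hR
    obtain ⟨K', J, f', g', hK', hJ, hs'⟩ := Cosyzygy.horseshoe (C := .of Rᵐᵒᵖ (I →₀ T)) hs hK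
    exact ⟨K', ⟨Z', hZ', hK'⟩, J, f', g',
      injective_of_extZero fun X _ _ _ => hJ.extZero (i := 0) (hC I X 0), hs'⟩
  · rintro K ⟨Z, hZ, hK⟩ I _ _ hI
    exact hK.extZero (i := 0) (hE (.of Rᵐᵒᵖ I) hI Z hZ 0)

end BassToGorenstein

/-! ## Gorenstein injective modules lie in the Bass class -/

section GorensteinToBass

theorem IsGorensteinInjective.exists_sequence {A : Type u} [Ring A] {K : Type u} [AddCommGroup K]
    [Module A K] (h : IsGorensteinInjective A K) :
    ∃ (Z J : ℤ → ModuleCat.{u} A) (f : ∀ i, Z i →ₗ[A] J i) (g : ∀ i, J i →ₗ[A] Z (i + 1)),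
      (∀ i, Module.Injective A (J i)) ∧ (∀ i, IsSES (f i) (g i)) ∧
      (∀ i (I : Type u) [AddCommGroup I] [Module A I], Module.Injective A I →
        ExtZero A I (Z i) 1) ∧ Nonempty (K ≃ₗ[A] Z 0) := by
  obtain ⟨C, hC, hex, hhom, hK⟩ := h
  have hs : ∀ i, IsSES (LinearMap.ker (C.d i)).subtype
      ((C.d i).codRestrict (LinearMap.ker (C.d (i + 1))) fun x =>
        (hex i).apply_apply_eq_zero x) := fun i =>
    { inj := Subtype.val_injective
      surj := fun y => by
        obtain ⟨x, hx⟩ := (hex i y).1 y.2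
        exact ⟨x, Subtype.ext hx⟩
      exact := fun x => ⟨fun h => ⟨⟨x, congrArg Subtype.val h⟩, rfl⟩, by
        rintro ⟨y, rfl⟩
        exact Subtype.ext y.2⟩ }
  refine ⟨fun i => .of A (LinearMap.ker (C.d i)), fun i => .of A (C.P i), _, _, hC, hs,
    fun i I _ _ hI => ?_, hK⟩
  refine (hs i).extZero_one_of_lift (extZero_of_injective (hC i) 0) fun φ => ?_
  obtain ⟨ψ, hψ⟩ := (hhom I hI i ((LinearMap.ker (C.d (i + 1))).subtype.comp φ)).1
    (LinearMap.ext fun x => (φ x).2)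
  exact ⟨ψ, LinearMap.ext fun x => Subtype.ext (LinearMap.congr_fun hψ x)⟩

theorem extZero_sequence {A : Type u} [Ring A] {Z J : ℤ → ModuleCat.{u} A}
    {f : ∀ i, Z i →ₗ[A] J i} {g : ∀ i, J i →ₗ[A] Z (i + 1)} (hJ : ∀ i, Module.Injective A (J i))
    (hs : ∀ i, IsSES (f i) (g i)) {W : Type u} [AddCommGroup W] [Module A W]
    (h : ∀ i, ExtZero A W (Z i) 1) (k : ℕ) (i : ℤ) : ExtZero A W (Z i) (k + 1) := by
  induction k generalizing i with
  | zero => exact h i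
  | succ k ih => exact (hs i).ext_first_right (extZero_of_injective (hJ i) _) (ih (i + 1))

theorem extZero_of_injDim_left {A : Type u} [Ring A] {Y : Type u} [AddCommGroup Y] [Module A Y]
    (hY : ∀ (I : Type u) [AddCommGroup I] [Module A I], Module.Injective A I →
      ∀ k, ExtZero A I Y (k + 1)) {n : ℕ} {X : ModuleCat.{u} A}
    (hX : HasClassCoresolution A (fun E => Module.Injective A E) n X) (k : ℕ) :
    ExtZero A X Y (k + 1) := by
  induction n generalizing X k with
  | zero => exact hY X hX k
  | succ n ih =>
    obtain ⟨m, hm, hr⟩ := hX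
    exact (IsSES.of_injective m.inj).ext_first_left (hY m.E hm k) (ih hr (k + 1))

variable {S R : Type u} [Ring S] [Ring R]
variable {T : Type u} [AddCommGroup T] [Module S T] [Module Rᵐᵒᵖ T] [SMulCommClass S Rᵐᵒᵖ T]

theorem IsSES.nu_third_injective {M' M M'' : Type u} [AddCommGroup M] [Module Rᵐᵒᵖ M]
    [AddCommGroup M'] [Module Rᵐᵒᵖ M'] [AddCommGroup M''] [Module Rᵐᵒᵖ M'']
    {f : M' →ₗ[Rᵐᵒᵖ] M} {g : M →ₗ[Rᵐᵒᵖ] M''} (h : IsSES f g) (hM : Injective (nuDual S R T M)) :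
    Injective (nuDual S R T M'') :=
  nuDual_injective_of fun c hc => char_ext fun x => by
    obtain ⟨y, rfl⟩ := h.surj x
    have h1 : nuDual S R T M (AddMonoidHom.comp c g.toAddMonoidHom) = 0 := by
      rw [nuDual_comp, hc, LinearMap.zero_comp]
    exact DFunLike.congr_fun (nuDual_eq_zero hM h1) y

theorem BassChar.congr (hW : IsWakamatsuTilting S R T) (hS : IsLeftCoherentRing S)
    {M N : Type u} [AddCommGroup M] [Module Rᵐᵒᵖ M] [AddCommGroup N] [Module Rᵐᵒᵖ N]
    (e : M ≃ₗ[Rᵐᵒᵖ] N) (hN : BassChar S R T N) : BassChar S R T M := by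
  have h0 : Module.Injective Rᵐᵒᵖ PUnit.{u + 1} := ⟨fun _ _ _ _ _ _ _ _ _ => ⟨0, fun _ => rfl⟩⟩
  have hs : IsSES e.toLinearMap (0 : N →ₗ[Rᵐᵒᵖ] PUnit.{u + 1}) :=
    ⟨e.injective, fun _ => ⟨0, rfl⟩, fun x => ⟨fun _ => e.surjective x, fun _ => rfl⟩⟩
  exact BassChar.first hs (fun _ => ⟨0, rfl⟩) hN (bassChar_of_injective hW hS h0)

theorem IsGorensteinInjective.bassChar (hW : IsWakamatsuTilting S R T)
    (hS : IsLeftCoherentRing S) {n : ℕ} (hr : InjDimLE Rᵐᵒᵖ T n)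
    {K : Type u} [AddCommGroup K] [Module Rᵐᵒᵖ K] (h : IsGorensteinInjective Rᵐᵒᵖ K) :
    BassChar S R T K := by
  obtain ⟨Z, J, f, g, hJ, hs, he, ⟨e⟩⟩ := h.exists_sequence
  have hJB := fun i => bassChar_of_injective (T := T) hW hS (hJ i)
  have hsucc : ∀ {p : ℤ → Prop}, (∀ i, p (i + 1)) → ∀ i, p i := fun hp i => by
    have := hp (i - 1)
    rwa [sub_add_cancel] at this
  have hext : ∀ i k, ExtZero Rᵐᵒᵖ T (Z i) (k + 1) := fun i =>
    extZero_of_injDim_left (fun I _ _ hI k => extZero_sequence hJ hs (fun i => he i I hI) k i) hr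
  have hl := fun i (φ : T →ₗ[Rᵐᵒᵖ] Z (i + 1)) => (hs i).exists_lift (hext i 0) φ
  have hinj : ∀ i, Injective (nuDual S R T (Z i)) :=
    hsucc fun i => (hs i).nu_third_injective (hJB i).nu.1
  have hnu : ∀ i, Bijective (nuDual S R T (Z i)) :=
    hsucc fun i => (hs i).nu_third (hl i) (hinj i) (hJB i).nu
  have htor : ∀ k i, ExtZero Sᵐᵒᵖ (T →ₗ[Rᵐᵒᵖ] Z i) (CharacterModule T) (k + 1) := fun k => by
    induction k with
    | zero =>
      refine hsucc fun i => (isSES_homMap S T (hs i) (hl i)).extZero_one_of_extension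
        ((hJB i).tor 0) fun φ => ?_
      obtain ⟨c, rfl⟩ := (hnu i).2 φ
      obtain ⟨c', hc'⟩ := exists_char_extension (f i).toAddMonoidHom (hs i).inj c
      obtain rfl : (AddMonoidHom.comp c' (f i).toAddMonoidHom : CharacterModule (Z i)) = c :=
        char_ext hc'
      exact ⟨_, (nuDual_comp (f i) c').symm⟩
    | succ k ih =>
      exact hsucc fun i => (isSES_homMap S T (hs i) (hl i)).ext_third_left (ih i)
        ((hJB i).tor (k + 1))
  exact BassChar.congr hW hS e ⟨hext 0, fun k => htor k 0, hnu 0⟩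

theorem bassChar_of_gidLE (hW : IsWakamatsuTilting S R T) (htf : IsTensorlyFaithful S R T)
    (hS : IsLeftCoherentRing S) {r : ℕ} (hr : InjDimLE Rᵐᵒᵖ T r) {n : ℕ} {M : ModuleCat.{u} Rᵐᵒᵖ}
    (hM : HasClassCoresolution Rᵐᵒᵖ (fun E => IsGorensteinInjective Rᵐᵒᵖ E) n M) :
    BassChar S R T M := by
  induction n generalizing M with
  | zero => exact IsGorensteinInjective.bassChar hW hS hr hM
  | succ n ih =>
    obtain ⟨m, hm, hq⟩ := hM
    exact BassChar.first_of_faithful (IsSES.of_injective m.inj) htf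
      (IsGorensteinInjective.bassChar hW hS hr hm) (ih hq)

end GorensteinToBass

/-- Let `T` be a tensorly faithful Wakamatsu tilting `(S,R)`-bimodule, with
`R` right Noetherian and `S` left coherent, such that `id(T_R) < ∞` and `id(_S T) < ∞`.
Then for a right `R`-module `M` we have `M ∈ ℬ_T(R)` iff `Gid(M) < ∞`. -/
theorem wakamatsu_bass_iff_finite_Gid
    (S R : Type u) [Ring S] [Ring R]
    (T : Type u) [AddCommGroup T] [Module S T] [Module Rᵐᵒᵖ T] [SMulCommClass S Rᵐᵒᵖ T]
    (hW : IsWakamatsuTilting S R T) (htf : IsTensorlyFaithful S R T)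
    (hRnoeth : IsRightNoetherianRing R) (hScoh : IsLeftCoherentRing S)
    (hidR : ∃ n, InjDimLE Rᵐᵒᵖ T n) (hidS : ∃ n, InjDimLE S T n)
    (M : Type u) [AddCommGroup M] [Module Rᵐᵒᵖ M] :
    InBassClass S R T M ↔ ∃ n, GidLE Rᵐᵒᵖ M n := by
  rw [inBassClass_iff]
  constructor
  · exact fun h => h.exists_gidLE hW hRnoeth hScoh hidR hidS
  · rintro ⟨n, hn⟩
    obtain ⟨r, hr⟩ := hidR
    exact bassChar_of_gidLE hW htf hScoh hr (M := .of Rᵐᵒᵖ M) hn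
end
end

section
/- Let S be a left coherent ring and N a right S-module, and let ℒ be the class of all right S-modules of finite flat dimension. If Ext^i_S(N, L) = 0 for every L ∈ ℒ and all i > 0, then there exists an ℒ-preenvelope f : N → P in which P is a projective right S-module. -/
open Function MulOpposite

universe u

noncomputable section

/-! ## Elementary properties of `N ⊗_S T` -/

section TensorLemmas

variable {S : Type u} [Ring S]
variable {F G : Type u} [AddCommGroup F] [Module Sᵐᵒᵖ F] [AddCommGroup G] [Module Sᵐᵒᵖ G]
variable {X Y : Type u} [AddCommGroup X] [Module S X] [AddCommGroup Y] [Module S Y]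

theorem MTensor.mk_add_left (n n' : G) (t : X) :
    (MTensor.mk (n + n') t : MTensor S G X) = MTensor.mk n t + MTensor.mk n' t := by
  show QuotientAddGroup.mk _ = _
  rw [TensorProduct.tmul_add]
  rfl

theorem MTensor.mk_zero_left (t : X) : (MTensor.mk (0 : G) t : MTensor S G X) = 0 := by
  show QuotientAddGroup.mk _ = _
  rw [TensorProduct.tmul_zero]
  rfl

theorem MTensor.mk_smul_right (s : S) (n : G) (t : X) :
    (MTensor.mk n (s • t) : MTensor S G X) = MTensor.mk (op s • n) t := by
  refine (QuotientAddGroup.eq_iff_sub_mem).2 ?_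
  exact AddSubgroup.subset_closure ⟨s, t, n, rfl⟩

theorem MTensor.induction {p : MTensor S G X → Prop} (z : MTensor S G X)
    (mk : ∀ n t, p (MTensor.mk n t)) (add : ∀ a b, p a → p b → p (a + b)) : p z := by
  induction z using QuotientAddGroup.induction_on with
  | H z =>
    induction z using TensorProduct.induction_on with
    | zero =>
      have h := mk 0 0
      rwa [MTensor.mk_zero_left] at h
    | tmul t n => exact mk n t
    | add a b ha hb => exact add _ _ ha hb

@[simp] theorem MTensor.map_mk (g : G →ₗ[Sᵐᵒᵖ] F) (n : G) (t : X) :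
    MTensor.map g (MTensor.mk n t : MTensor S G X) = MTensor.mk (g n) t := rfl

@[simp] theorem MTensor.lmap_mk (g : X →ₗ[S] Y) (n : G) (t : X) :
    MTensor.lmap g (MTensor.mk n t : MTensor S G X) = MTensor.mk n (g t) := rfl

theorem MTensor.map_lmap (g : G →ₗ[Sᵐᵒᵖ] F) (h : X →ₗ[S] Y) (z : MTensor S G X) :
    MTensor.map g (MTensor.lmap h z) = MTensor.lmap h (MTensor.map g z) := by
  induction z using MTensor.induction with
  | mk n t => rfl
  | add a b ha hb => simp only [map_add, ha, hb]

theorem MTensor.map_surjective (g : G →ₗ[Sᵐᵒᵖ] F) (hg : Surjective g) :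
    Surjective (MTensor.map (T := X) g) := by
  intro z
  induction z using MTensor.induction with
  | mk n t =>
    obtain ⟨m, rfl⟩ := hg n
    exact ⟨MTensor.mk m t, rfl⟩
  | add a b ha hb =>
    obtain ⟨a, rfl⟩ := ha
    obtain ⟨b, rfl⟩ := hb
    exact ⟨a + b, map_add _ _ _⟩

theorem MTensor.map_map_eq_zero {E : Type u} [AddCommGroup E] [Module Sᵐᵒᵖ E]
    (g : G →ₗ[Sᵐᵒᵖ] F) (h : F →ₗ[Sᵐᵒᵖ] E) (hgh : h ∘ₗ g = 0) (z : MTensor S G X) :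
    MTensor.map h (MTensor.map g z) = 0 := by
  induction z using MTensor.induction with
  | mk n t =>
    have : h (g n) = 0 := LinearMap.congr_fun hgh n
    simp [this, MTensor.mk_zero_left]
  | add a b ha hb => simp only [map_add, ha, hb, add_zero]

/-- Right exactness of `N ⊗_S T` in the variable `N`. -/
theorem MTensor.exists_map_ker_subtype_eq (π : G →ₗ[Sᵐᵒᵖ] F) (hπ : Surjective π)
    (z : MTensor S G X) (hz : MTensor.map π z = 0) :
    ∃ w : MTensor S (LinearMap.ker π) X, MTensor.map (LinearMap.ker π).subtype w = z := by
  induction z using QuotientAddGroup.induction_on with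
  | H z =>
    have hz' : LinearMap.lTensor X π.toAddMonoidHom.toIntLinearMap z ∈ mtRel S F X :=
      (QuotientAddGroup.eq_zero_iff _).1 hz
    have hle : mtRel S F X ≤ (mtRel S G X).map
        (LinearMap.lTensor X π.toAddMonoidHom.toIntLinearMap).toAddMonoidHom := by
      refine (AddSubgroup.closure_le _).2 ?_
      rintro x ⟨s, t, n, rfl⟩
      obtain ⟨m, rfl⟩ := hπ n
      exact ⟨_, AddSubgroup.subset_closure ⟨s, t, m, rfl⟩, by simp⟩
    obtain ⟨r, hr, hrz⟩ := hle hz'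
    have hex : Function.Exact (LinearMap.ker π).subtype.toAddMonoidHom.toIntLinearMap
        π.toAddMonoidHom.toIntLinearMap := by
      intro x
      exact ⟨fun h => ⟨⟨x, h⟩, rfl⟩, by rintro ⟨y, rfl⟩; exact y.2⟩
    have h0 : LinearMap.lTensor X π.toAddMonoidHom.toIntLinearMap (z - r) = 0 := by
      rw [map_sub, sub_eq_zero]
      exact hrz.symm
    obtain ⟨w, hw⟩ := (lTensor_exact X hex hπ _).1 h0
    refine ⟨QuotientAddGroup.mk w, ?_⟩
    refine (QuotientAddGroup.eq_iff_sub_mem).2 ?_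
    rw [LinearMap.toAddMonoidHom_coe, hw, sub_sub_cancel_left]
    exact neg_mem hr

/-- Right exactness of `N ⊗_S T` in the variable `T`. -/
theorem MTensor.exists_lmap_ker_subtype_eq (π : X →ₗ[S] Y) (hπ : Surjective π)
    (z : MTensor S G X) (hz : MTensor.lmap π z = 0) :
    ∃ w : MTensor S G (LinearMap.ker π), MTensor.lmap (LinearMap.ker π).subtype w = z := by
  induction z using QuotientAddGroup.induction_on with
  | H z =>
    have hz' : LinearMap.rTensor G π.toAddMonoidHom.toIntLinearMap z ∈ mtRel S G Y :=
      (QuotientAddGroup.eq_zero_iff _).1 hz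
    have hle : mtRel S G Y ≤ (mtRel S G X).map
        (LinearMap.rTensor G π.toAddMonoidHom.toIntLinearMap).toAddMonoidHom := by
      refine (AddSubgroup.closure_le _).2 ?_
      rintro x ⟨s, t, n, rfl⟩
      obtain ⟨m, rfl⟩ := hπ t
      exact ⟨_, AddSubgroup.subset_closure ⟨s, m, n, rfl⟩, by simp⟩
    obtain ⟨r, hr, hrz⟩ := hle hz'
    have hex : Function.Exact (LinearMap.ker π).subtype.toAddMonoidHom.toIntLinearMap
        π.toAddMonoidHom.toIntLinearMap := by
      intro x
      exact ⟨fun h => ⟨⟨x, h⟩, rfl⟩, by rintro ⟨y, rfl⟩; exact y.2⟩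
    have h0 : LinearMap.rTensor G π.toAddMonoidHom.toIntLinearMap (z - r) = 0 := by
      rw [map_sub, sub_eq_zero]
      exact hrz.symm
    obtain ⟨w, hw⟩ := (rTensor_exact G hex hπ _).1 h0
    refine ⟨QuotientAddGroup.mk w, ?_⟩
    refine (QuotientAddGroup.eq_iff_sub_mem).2 ?_
    rw [LinearMap.toAddMonoidHom_coe, hw, sub_sub_cancel_left]
    exact neg_mem hr

/-- The additive map out of `G ⊗_S X` induced by a balanced biadditive map. -/
def MTensor.lift {A : Type*} [AddCommGroup A] (b : X →+ G →+ A)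
    (hb : ∀ (s : S) t n, b (s • t) n = b t (op s • n)) : MTensor S G X →+ A :=
  QuotientAddGroup.lift (mtRel S G X) (TensorProduct.liftAddHom b (fun z t f => by simp))
    (by
      refine (AddSubgroup.closure_le _).2 ?_
      rintro x ⟨s, t, n, rfl⟩
      simp [hb])

@[simp] theorem MTensor.lift_mk {A : Type*} [AddCommGroup A] (b : X →+ G →+ A)
    (hb : ∀ (s : S) t n, b (s • t) n = b t (op s • n)) (n : G) (t : X) :
    MTensor.lift b hb (MTensor.mk n t) = b t n :=
  TensorProduct.liftAddHom_tmul (R := ℤ) b (fun z t f => by simp) t n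

end TensorLemmas

/-! ## Free right modules are flat -/

section Free

variable {S : Type u} [Ring S] (I : Type u)
variable {X Y : Type u} [AddCommGroup X] [Module S X] [AddCommGroup Y] [Module S Y]

/-- The map `S^(I) ⊗_S X → X^(I)`. -/
def MTensor.freeToFinsupp (X : Type u) [AddCommGroup X] [Module S X] :
    MTensor S (I →₀ Sᵐᵒᵖ) X →+ (I →₀ X) :=
  MTensor.lift
    (AddMonoidHom.mk' (fun x =>
      Finsupp.mapRange.addMonoidHom
        (AddMonoidHom.mk' (fun a : Sᵐᵒᵖ => a.unop • x) (fun a b => by simp [add_smul])))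
      (fun x y => by ext; simp))
    (fun s x f => by ext i; simp [mul_smul])

theorem MTensor.freeToFinsupp_mk (f : I →₀ Sᵐᵒᵖ) (x : X) (i : I) :
    MTensor.freeToFinsupp I X (MTensor.mk f x) i = (f i).unop • x := by
  simp [MTensor.freeToFinsupp]

theorem MTensor.freeToFinsupp_injective : Injective (MTensor.freeToFinsupp (S := S) I X) := by
  let inv : (I →₀ X) →+ MTensor S (I →₀ Sᵐᵒᵖ) X :=
    Finsupp.liftAddHom fun i =>
      AddMonoidHom.mk' (fun x => MTensor.mk (Finsupp.single i 1) x)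
        (fun x y => MTensor.mk_add_right _ _ _)
  refine LeftInverse.injective (g := inv) fun z => ?_
  induction z using MTensor.induction with
  | add a b ha hb => rw [map_add, map_add, ha, hb]
  | mk f x =>
    induction f using Finsupp.induction_linear with
    | zero => simp [MTensor.mk_zero_left]
    | add f g hf hg => rw [MTensor.mk_add_left, map_add, map_add, hf, hg]
    | single i a =>
      have h : MTensor.freeToFinsupp I X (MTensor.mk (Finsupp.single i a) x) =
          Finsupp.single i (a.unop • x) := by
        classical
        ext j
        rw [MTensor.freeToFinsupp_mk, Finsupp.single_apply, Finsupp.single_apply]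
        split_ifs <;> simp
      rw [h]
      rw [Finsupp.liftAddHom_apply_single, AddMonoidHom.mk'_apply, MTensor.mk_smul_right]
      simp

theorem MTensor.freeToFinsupp_lmap (g : X →ₗ[S] Y) (z : MTensor S (I →₀ Sᵐᵒᵖ) X) (i : I) :
    MTensor.freeToFinsupp I Y (MTensor.lmap g z) i = g (MTensor.freeToFinsupp I X z i) := by
  induction z using MTensor.induction with
  | mk n t => simp [MTensor.freeToFinsupp_mk]
  | add a b ha hb => simp [ha, hb]

theorem isFlatRightModule_finsupp : IsFlatRightModule S (I →₀ Sᵐᵒᵖ) := by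
  intro X Y _ _ _ _ g hg z w hzw
  refine MTensor.freeToFinsupp_injective I (Finsupp.ext fun i => hg ?_)
  rw [← MTensor.freeToFinsupp_lmap, ← MTensor.freeToFinsupp_lmap, hzw]

end Free

/-! ## The equational criterion for flatness -/

section Equational

variable {S : Type u} [Ring S]
variable {F : Type u} [AddCommGroup F] [Module Sᵐᵒᵖ F]

/-- The families `(x_i)` of the form `x_i = ∑_j y_j a_{ji}` with `∑_i a_{ji} s_i = 0` for
all `j`. -/
def trivialRelations (F : Type u) [AddCommGroup F] [Module Sᵐᵒᵖ F] {ι : Type u} [Fintype ι]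
    (s : ι → S) : AddSubgroup (ι → F) :=
  AddSubgroup.closure {z | ∃ (a : ι → S) (y : F), ∑ i, a i * s i = 0 ∧ z = fun i => op (a i) • y}

variable (S F) in
/-- All relations `∑ x_i s_i = 0` in `F` are trivial. -/
def HasTrivialRelations : Prop :=
  ∀ (ι : Type u) [Fintype ι] (s : ι → S) (x : ι → F),
    ∑ i, op (s i) • x i = 0 → x ∈ trivialRelations F s

theorem IsFlatRightModule.hasTrivialRelations (hF : IsFlatRightModule S F) :
    HasTrivialRelations S F := by
  classical
  intro ι _ s x hx
  let φ : (ι → S) →ₗ[S] S := Fintype.linearCombination S s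
  let z : MTensor S F (ι → S) := ∑ i, MTensor.mk (x i) (Pi.single i 1)
  have hφz : MTensor.lmap φ.rangeRestrict z = 0 := by
    refine hF _ _ φ.range.subtype Subtype.val_injective ?_
    rw [map_zero]
    simp only [z, map_sum, MTensor.lmap_mk, Submodule.subtype_apply]
    have h : ∀ i, (MTensor.mk (x i) (φ (Pi.single i 1)) : MTensor S F S) =
        AddMonoidHom.mk' (fun n : F => (MTensor.mk n (1 : S) : MTensor S F S))
          (fun n n' => MTensor.mk_add_left n n' 1) (op (s i) • x i) := by
      intro i
      have : φ (Pi.single i 1) = s i • (1 : S) := by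
        simp [φ, Fintype.linearCombination_apply_single]
      rw [this, MTensor.mk_smul_right]
      rfl
    exact (Finset.sum_congr rfl fun i _ => h i).trans (by rw [← map_sum, hx, map_zero])
  obtain ⟨w, hw⟩ := MTensor.exists_lmap_ker_subtype_eq _ φ.surjective_rangeRestrict z hφz
  let ev : MTensor S F (ι → S) →+ (ι → F) := MTensor.lift
    (AddMonoidHom.mk' (fun a => AddMonoidHom.mk' (fun n i => op (a i) • n)
      (fun n m => by ext; simp)) (fun a b => by ext; simp [add_smul]))
    (fun s a n => by ext; simp [mul_smul])
  have hev : ∀ a n, ev (MTensor.mk n a) = fun i => op (a i) • n := fun a n => by simp [ev]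
  have hz : ev z = x := by
    ext i
    simp only [z, map_sum, hev, Finset.sum_apply]
    rw [Finset.sum_eq_single i]
    · simp
    · intro j _ hj
      simp [Pi.single_eq_of_ne hj.symm]
    · simp
  rw [← hz, ← hw]
  clear hw
  induction w using MTensor.induction with
  | mk n t =>
    refine AddSubgroup.subset_closure ⟨t.1, n, ?_, by simp [hev]⟩
    have h : φ t.1 = 0 := congrArg Subtype.val (LinearMap.mem_ker.1 t.2)
    simpa only [φ, Fintype.linearCombination_apply, smul_eq_mul] using h
  | add a b ha hb =>
    rw [map_add, map_add]
    exact add_mem ha hb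

variable {I : Type u} {π : (I →₀ Sᵐᵒᵖ) →ₗ[Sᵐᵒᵖ] F}

/-- Relations lift along surjections onto a module with trivial relations. -/
theorem HasTrivialRelations.exists_lift (hF : HasTrivialRelations S F)
    {G : Type u} [AddCommGroup G] [Module Sᵐᵒᵖ G] (π : G →ₗ[Sᵐᵒᵖ] F) (hπ : Surjective π)
    {ι : Type u} [Fintype ι] (s : ι → S) (x : ι → F) (hx : ∑ i, op (s i) • x i = 0) :
    ∃ g : ι → G, (∀ i, π (g i) = x i) ∧ ∑ i, op (s i) • g i = 0 := by
  have hmem := hF ι s x hx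
  clear hx
  induction hmem using AddSubgroup.closure_induction with
  | mem z hz =>
    obtain ⟨a, y, ha, rfl⟩ := hz
    obtain ⟨g, rfl⟩ := hπ y
    refine ⟨fun i => op (a i) • g, fun i => map_smul _ _ _, ?_⟩
    simp_rw [smul_smul, ← op_mul, ← Finset.sum_smul, ← Finset.op_sum, ha]
    simp
  | zero => exact ⟨0, by simp, by simp⟩
  | add a b _ _ ha hb =>
    obtain ⟨g, hg, hg'⟩ := ha
    obtain ⟨k, hk, hk'⟩ := hb
    exact ⟨g + k, by simp [hg, hk], by simp [Finset.sum_add_distrib, hg', hk']⟩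
  | neg a _ ha =>
    obtain ⟨g, hg, hg'⟩ := ha
    exact ⟨-g, by simp [hg], by simp [hg']⟩

theorem HasTrivialRelations.exists_endo_apply_eq (hF : HasTrivialRelations S F)
    (hπ : Surjective π) (k : I →₀ Sᵐᵒᵖ) (hk : π k = 0) :
    ∃ θ : (I →₀ Sᵐᵒᵖ) →ₗ[Sᵐᵒᵖ] (I →₀ Sᵐᵒᵖ), π ∘ₗ θ = 0 ∧ θ k = k := by
  classical
  have hsum : ∑ i : k.support, op (k i).unop • π (Finsupp.single i.1 1) = 0 := by
    rw [Finset.sum_coe_sort k.support (fun i => op (k i).unop • π (Finsupp.single i 1)), ← hk]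
    conv_rhs => rw [← Finsupp.sum_single k, Finsupp.sum, map_sum]
    refine Finset.sum_congr rfl fun i _ => ?_
    rw [← map_smul]
    simp
  obtain ⟨g, hg, hg'⟩ := hF.exists_lift π hπ _ _ hsum
  let θ : (I →₀ Sᵐᵒᵖ) →ₗ[Sᵐᵒᵖ] (I →₀ Sᵐᵒᵖ) :=
    Finsupp.linearCombination Sᵐᵒᵖ fun i =>
      if h : i ∈ k.support then Finsupp.single i 1 - g ⟨i, h⟩ else 0
  refine ⟨θ, ?_, ?_⟩
  · ext i
    by_cases h : i ∈ k.support
    · simp [θ, dif_pos h, hg, -Finsupp.mem_support_iff]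
    · simp [θ, dif_neg h, -Finsupp.mem_support_iff]
  · have h1 : θ k = ∑ i : k.support, (k i • Finsupp.single i.1 1 - k i • g i) := by
      rw [Finsupp.linearCombination_apply, Finsupp.sum, ← Finset.sum_coe_sort]
      refine Finset.sum_congr rfl fun i _ => ?_
      rw [dif_pos i.2, smul_sub]
    rw [h1, Finset.sum_sub_distrib]
    have h2 : ∑ i : k.support, k i • g i = 0 := hg'
    rw [h2, sub_zero, Finset.sum_coe_sort k.support (fun i => k i • Finsupp.single i (1 : Sᵐᵒᵖ))]
    conv_rhs => rw [← Finsupp.sum_single k, Finsupp.sum]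
    simp

/-- A presentation of a module with trivial relations by a free module is locally split. -/
theorem HasTrivialRelations.exists_endo_forall_apply_eq (hF : HasTrivialRelations S F)
    (hπ : Surjective π) (T : Finset (LinearMap.ker π)) :
    ∃ θ : (I →₀ Sᵐᵒᵖ) →ₗ[Sᵐᵒᵖ] (I →₀ Sᵐᵒᵖ), π ∘ₗ θ = 0 ∧ ∀ k ∈ T, θ k.1 = k.1 := by
  classical
  induction T using Finset.induction_on with
  | empty => exact ⟨0, by simp, by simp⟩
  | insert k T _ ih =>
    obtain ⟨θ₁, h₁, hT⟩ := ih
    have h₁' (z) : π (θ₁ z) = 0 := LinearMap.congr_fun h₁ z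
    obtain ⟨θ₂, h₂, hk⟩ := hF.exists_endo_apply_eq hπ (k.1 - θ₁ k.1)
      (by rw [map_sub, h₁', LinearMap.mem_ker.1 k.2, sub_zero])
    have h₂' (z) : π (θ₂ z) = 0 := LinearMap.congr_fun h₂ z
    refine ⟨θ₁ + θ₂ - θ₂ ∘ₗ θ₁, ?_, ?_⟩
    · refine LinearMap.ext fun z => ?_
      simp [h₁', h₂']
    · intro l hl
      obtain rfl | hl := Finset.mem_insert.1 hl
      · rw [map_sub] at hk
        simp only [LinearMap.sub_apply, LinearMap.add_apply, LinearMap.comp_apply]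
        rw [add_sub_assoc, hk]
        abel
      · simp [hT l hl]

theorem HasTrivialRelations.isFlatRightModule (hF : HasTrivialRelations S F) :
    IsFlatRightModule S F := by
  classical
  intro X Y _ _ _ _ g hg
  refine (injective_iff_map_eq_zero _).2 fun z hz => ?_
  let π : (F →₀ Sᵐᵒᵖ) →ₗ[Sᵐᵒᵖ] F := Finsupp.linearCombination Sᵐᵒᵖ id
  have hπ : Surjective π := Finsupp.linearCombination_id_surjective Sᵐᵒᵖ F
  obtain ⟨w, rfl⟩ := MTensor.map_surjective π hπ z
  rw [← MTensor.map_lmap] at hz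
  obtain ⟨v, hv⟩ := MTensor.exists_map_ker_subtype_eq π hπ _ hz
  have hfix : ∃ T : Finset (LinearMap.ker π), ∀ θ : (F →₀ Sᵐᵒᵖ) →ₗ[Sᵐᵒᵖ] (F →₀ Sᵐᵒᵖ),
      (∀ k ∈ T, θ k.1 = k.1) → MTensor.map θ (MTensor.map (LinearMap.ker π).subtype v) =
        MTensor.map (LinearMap.ker π).subtype v := by
    clear hv
    induction v using MTensor.induction with
    | mk n t => exact ⟨{n}, fun θ hθ => by simp [hθ n (Finset.mem_singleton_self n)]⟩
    | add a b ha hb =>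
      obtain ⟨A, hA⟩ := ha
      obtain ⟨B, hB⟩ := hb
      refine ⟨A ∪ B, fun θ hθ => ?_⟩
      rw [map_add, map_add, hA θ fun k hk => hθ k (Finset.mem_union_left _ hk),
        hB θ fun k hk => hθ k (Finset.mem_union_right _ hk)]
  obtain ⟨T, hT⟩ := hfix
  obtain ⟨θ, hπθ, hθ⟩ := hF.exists_endo_forall_apply_eq hπ T
  have h := hT θ hθ
  rw [hv, MTensor.map_lmap] at h
  rw [← isFlatRightModule_finsupp F X Y g hg h]
  exact MTensor.map_map_eq_zero _ _ hπθ _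

/-- The kernel of a surjection from a free right module onto a flat one is flat. -/
theorem IsFlatRightModule.ker_of_free (hF : IsFlatRightModule S F) (hπ : Surjective π) :
    IsFlatRightModule S (LinearMap.ker π) := by
  classical
  refine HasTrivialRelations.isFlatRightModule fun ι _ s x hx => ?_
  obtain ⟨θ, hπθ, hθ⟩ :=
    hF.hasTrivialRelations.exists_endo_forall_apply_eq hπ (Finset.univ.image x)
  let ψ : (I →₀ Sᵐᵒᵖ) →ₗ[Sᵐᵒᵖ] LinearMap.ker π :=
    θ.codRestrict _ fun z => LinearMap.congr_fun hπθ z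
  have hψ (i) : ψ (x i).1 = x i :=
    Subtype.ext (hθ (x i) (Finset.mem_image_of_mem x (Finset.mem_univ i)))
  have hx' : ∑ i, op (s i) • (x i).1 = 0 := by
    simpa using congrArg Subtype.val hx
  have hmem := (isFlatRightModule_finsupp I).hasTrivialRelations ι s _ hx'
  have hle : trivialRelations (I →₀ Sᵐᵒᵖ) s ≤
      (trivialRelations (LinearMap.ker π) s).comap (ψ.toAddMonoidHom.compLeft ι) := by
    refine (AddSubgroup.closure_le _).2 ?_
    rintro z ⟨a, y, ha, rfl⟩
    refine AddSubgroup.subset_closure ⟨a, ψ y, ha, ?_⟩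
    ext1 i
    exact map_smul ψ _ _
  have := hle hmem
  rw [AddSubgroup.mem_comap] at this
  convert this using 1
  ext1 i
  exact (hψ i).symm

/-- Over a left coherent ring, products of flat right modules are flat. -/
theorem isFlatRightModule_pi (hS : IsLeftCoherentRing S) {Λ : Type u} (F : Λ → Type u)
    [∀ l, AddCommGroup (F l)] [∀ l, Module Sᵐᵒᵖ (F l)]
    (hF : ∀ l, IsFlatRightModule S (F l)) : IsFlatRightModule S (∀ l, F l) := by
  classical
  refine HasTrivialRelations.isFlatRightModule fun ι _ s x hx => ?_
  let φ : (ι → S) →ₗ[S] S := Fintype.linearCombination S s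
  have hfg : φ.range.FG := by
    rw [LinearMap.range_eq_map]
    exact (Module.Finite.fg_top).map φ
  have := hS _ hfg
  have hker : (LinearMap.ker φ.rangeRestrict).FG :=
    Module.FinitePresentation.fg_ker _ φ.surjective_rangeRestrict
  rw [LinearMap.ker_rangeRestrict] at hker
  obtain ⟨m, b, hb⟩ := Submodule.fg_iff_exists_fin_generating_family.1 hker
  have hbs (j) : ∑ i, b j i * s i = 0 := by
    have : b j ∈ LinearMap.ker φ := hb ▸ Submodule.subset_span ⟨j, rfl⟩
    simpa [φ, Fintype.linearCombination_apply] using this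
  have hcomp (l : Λ) : ∃ y : Fin m → F l, ∀ i, x i l = ∑ j, op (b j i) • y j := by
    have hl : ∑ i, op (s i) • x i l = 0 := by simpa using congrFun hx l
    have hmem := (hF l).hasTrivialRelations ι s _ hl
    suffices ∀ z ∈ trivialRelations (F l) s, ∃ y : Fin m → F l, ∀ i, z i = ∑ j, op (b j i) • y j
      from this _ hmem
    intro z hz
    induction hz using AddSubgroup.closure_induction with
    | mem z hz =>
      obtain ⟨a, y, ha, rfl⟩ := hz
      have hmem_span : a ∈ Submodule.span S (Set.range b) := by
        rw [hb, LinearMap.mem_ker]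
        simpa [φ, Fintype.linearCombination_apply] using ha
      obtain ⟨c, rfl⟩ := (Submodule.mem_span_range_iff_exists_fun S).1 hmem_span
      exact ⟨fun j => op (c j) • y, fun i => by
        simp [smul_smul, Finset.sum_smul, Finset.op_sum]⟩
    | zero => exact ⟨0, by simp⟩
    | add u v _ _ hu hv =>
      obtain ⟨y, hy⟩ := hu
      obtain ⟨y', hy'⟩ := hv
      exact ⟨y + y', by simp [hy, hy', Finset.sum_add_distrib]⟩
    | neg u _ hu =>
      obtain ⟨y, hy⟩ := hu
      exact ⟨-y, by simp [hy]⟩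
  choose y hy using hcomp
  have hx' : x = ∑ j, fun i => op (b j i) • fun l => y l j := by
    ext i l
    simp [hy]
  rw [hx']
  exact sum_mem fun j _ => AddSubgroup.subset_closure ⟨b j, _, hbs j, rfl⟩

end Equational

/-! ## Lifting along surjections -/

theorem ExtVanishAll.exists_lift {A : Type u} [Ring A] {N E L : Type u} [AddCommGroup N]
    [Module A N] [AddCommGroup E] [Module A E] [AddCommGroup L] [Module A L]
    (p : E →ₗ[A] L) (hp : Surjective p) (hN : ExtVanishAll A N (LinearMap.ker p))
    (g : N →ₗ[A] L) : ∃ h : N →ₗ[A] E, p ∘ₗ h = g := by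
  obtain ⟨Q, hQ, hex⟩ := hN
  have := hQ.proj 0
  obtain ⟨a, ha⟩ := Module.projective_lifting_property p (g ∘ₗ Q.ε) hp
  have ha' (z) : p (a z) = g (Q.ε z) := LinearMap.congr_fun ha z
  let b : Q.P 1 →ₗ[A] LinearMap.ker p := (a ∘ₗ Q.d 0).codRestrict _ fun z => by
    simp [ha', hQ.exact0.apply_apply_eq_zero]
  have hb : b ∘ₗ Q.d 1 = 0 := by
    ext z
    simp [b, (hQ.exactSucc 0).apply_apply_eq_zero]
  obtain ⟨c, hc⟩ := (hex 0 b).1 hb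
  let k : Q.P 0 →ₗ[A] E := a - (LinearMap.ker p).subtype ∘ₗ c
  have hk : LinearMap.ker Q.ε ≤ LinearMap.ker k := by
    intro z hz
    obtain ⟨y, rfl⟩ := (hQ.exact0 z).1 hz
    have := congrArg Subtype.val (LinearMap.congr_fun hc y)
    simpa [k, b, sub_eq_zero] using this.symm
  let e := Q.ε.quotKerEquivOfSurjective hQ.surj
  have he (z) : e.symm (Q.ε z) = Submodule.Quotient.mk z := by
    rw [LinearEquiv.symm_apply_eq]
    rfl
  refine ⟨(LinearMap.ker Q.ε).liftQ k hk ∘ₗ e.symm.toLinearMap, LinearMap.ext fun n => ?_⟩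
  obtain ⟨z, rfl⟩ := hQ.surj n
  simp [he, k, ha']

/-- A map from `N` to a free module factors through the free module on `N × ℕ`. -/
theorem exists_factor_finsupp_prod_nat {A : Type u} [Ring A] {N I : Type u} [AddCommGroup N]
    [Module A N] (φ : N →ₗ[A] (I →₀ A)) :
    ∃ (α : N →ₗ[A] (N × ℕ →₀ A)) (β : (N × ℕ →₀ A) →ₗ[A] (I →₀ A)), β ∘ₗ α = φ := by
  by_cases hI : Nonempty I
  swap
  · have := not_nonempty_iff.1 hI
    exact ⟨0, 0, LinearMap.ext fun n => Subsingleton.elim _ _⟩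
  let h : N × ℕ → I := fun x => (φ x.1).support.toList.getD x.2 hI.some
  refine ⟨Finsupp.lmapDomain A A (invFun h) ∘ₗ φ, Finsupp.lmapDomain A A h, ?_⟩
  refine LinearMap.ext fun n => ?_
  simp only [LinearMap.comp_apply, Finsupp.lmapDomain_apply]
  rw [← Finsupp.mapDomain_comp]
  refine (Finsupp.mapDomain_congr fun i hi => ?_).trans Finsupp.mapDomain_id
  obtain ⟨k, hk, hki⟩ := List.mem_iff_getElem.1 (Finset.mem_toList.2 hi)
  exact invFun_eq (f := h) ⟨(n, k), (List.getD_eq_getElem _ _ hk).trans hki⟩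

/-- Let `S` be a left coherent ring and `N` a right `S`-module, and let `ℒ`
be the class of right `S`-modules of finite flat dimension. If `Ext^{i≥1}_S(N, L) = 0` for
all `L ∈ ℒ` then `N` has an `ℒ`-preenvelope `f : N → P` with `P` projective. -/
theorem exists_projective_preenvelope_of_ext_vanishing
    (S : Type u) [Ring S] (hScoh : IsLeftCoherentRing S)
    (N : Type u) [AddCommGroup N] [Module Sᵐᵒᵖ N]
    (hext : ∀ (L : Type u) [AddCommGroup L] [Module Sᵐᵒᵖ L],
      (∃ n, FlatDimLE S L n) → ExtVanishAll Sᵐᵒᵖ N L) :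
    ∃ (P : ModuleCat.{u} Sᵐᵒᵖ) (f : N →ₗ[Sᵐᵒᵖ] P),
      Module.Projective Sᵐᵒᵖ P ∧ (∃ n, FlatDimLE S P n) ∧
      ∀ (L : Type u) [AddCommGroup L] [Module Sᵐᵒᵖ L], (∃ n, FlatDimLE S L n) →
        ∀ g : N →ₗ[Sᵐᵒᵖ] L, ∃ h : (P : Type u) →ₗ[Sᵐᵒᵖ] L, h.comp f = g := by
  have exists_flat_lift : ∀ (n : ℕ) (L : Type u) [AddCommGroup L] [Module Sᵐᵒᵖ L],
      FlatDimLE S L n → ∀ g : N →ₗ[Sᵐᵒᵖ] L, ∃ (F : ModuleCat.{u} Sᵐᵒᵖ) (q : F →ₗ[Sᵐᵒᵖ] L)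
        (g' : N →ₗ[Sᵐᵒᵖ] F), IsFlatRightModule S F ∧ q ∘ₗ g' = g := by
    intro n L _ _ hL g
    cases n with
    | zero => exact ⟨ModuleCat.of Sᵐᵒᵖ L, LinearMap.id, g, hL, rfl⟩
    | succ n =>
      obtain ⟨e, he, hker⟩ := hL
      obtain ⟨g', hg'⟩ := (hext (LinearMap.ker e.f) ⟨n, hker⟩).exists_lift e.f e.surj g
      exact ⟨e.P, e.f, g', he, hg'⟩
  have exists_free_lift : ∀ (F : Type u) [AddCommGroup F] [Module Sᵐᵒᵖ F],
      IsFlatRightModule S F → ∀ g : N →ₗ[Sᵐᵒᵖ] F, ∃ g' : N →ₗ[Sᵐᵒᵖ] (F →₀ Sᵐᵒᵖ),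
        Finsupp.linearCombination Sᵐᵒᵖ id ∘ₗ g' = g := by
    intro F _ _ hF g
    have hsurj := Finsupp.linearCombination_id_surjective Sᵐᵒᵖ F
    exact (hext _ ⟨0, hF.ker_of_free hsurj⟩).exists_lift _ hsurj g
  let C : Type u := N × ℕ →₀ Sᵐᵒᵖ
  let D : Type u := (N →ₗ[Sᵐᵒᵖ] C) → C
  have hD : IsFlatRightModule S D :=
    isFlatRightModule_pi hScoh (fun _ => C) fun _ => isFlatRightModule_finsupp _
  obtain ⟨f, hf⟩ := exists_free_lift D hD (LinearMap.pi fun α => α)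
  refine ⟨ModuleCat.of Sᵐᵒᵖ (D →₀ Sᵐᵒᵖ), f, inferInstanceAs (Module.Projective Sᵐᵒᵖ (D →₀ Sᵐᵒᵖ)),
    ⟨0, isFlatRightModule_finsupp D⟩, ?_⟩
  rintro L _ _ ⟨n, hL⟩ g
  obtain ⟨F, q, g₁, hF, rfl⟩ := exists_flat_lift n L hL g
  obtain ⟨g₂, rfl⟩ := exists_free_lift F hF g₁
  obtain ⟨α, β, rfl⟩ := exists_factor_finsupp_prod_nat g₂
  refine ⟨q ∘ₗ Finsupp.linearCombination Sᵐᵒᵖ id ∘ₗ β ∘ₗ LinearMap.proj α ∘ₗ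
    Finsupp.linearCombination Sᵐᵒᵖ id, LinearMap.ext fun x => ?_⟩
  have := congrFun (LinearMap.congr_fun hf x) α
  exact congrArg (fun c => q (Finsupp.linearCombination Sᵐᵒᵖ id (β c))) this
end
end
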